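/- arXiv:1102.4199 — 2 statements merged into one kernel-verified Lean document; each statement's English description precedes it below -/
import Mathlib

section
/- Set D = ln κ / ln(κ/a) and ν = ln(κ/a). For Λ > 0 let N(Λ) denote the number of eigenvalues in (0, Λ] of the Dirichlet problem y(0) = y(1) = 0 for the equation −y'' − λρy = 0 with weight ρ the distributional derivative of the Cantor-type self-similar function P with parameters κ, a, b; assume N(Λ) is finite for every Λ > 0. Suppose s : ℝ → ℝ is a continuous ν-periodic function such that N(Λ) = Λ^D·(s(ln Λ) + o(1)) as Λ → +∞. Then s is not a constant function. -/
open MeasureTheory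

/-- A continuous function `f : [0,1] → ℝ` is a *self-similar function of Cantor type*
with parameters `κ`, `a`, `b` if `f 0 = 0`, `f 1 = 1`, `f` is constant on each interval
`(α_{2k-1}, α_{2k})` for `k ∈ {1, …, κ-1}` (where `α_{2k} = k(a+b)`, `α_{2k+1} = α_{2k} + a`),
and for each `k ∈ {0, …, κ-1}` the function `x ↦ κ·f(α_{2k} + a·x)` differs from `f`
by an additive constant. -/
def CantorType (κ : ℕ) (a b : ℝ) (f : ℝ → ℝ) : Prop :=
  ContinuousOn f (Set.Icc 0 1) ∧ f 0 = 0 ∧ f 1 = 1 ∧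
  (∀ k : ℕ, 1 ≤ k → k ≤ κ - 1 →
    ∃ c : ℝ, ∀ x ∈ Set.Ioo (((k : ℝ) - 1) * (a + b) + a) ((k : ℝ) * (a + b)), f x = c) ∧
  (∀ k : ℕ, k ≤ κ - 1 → ∃ c : ℝ, ∀ x ∈ Set.Icc (0 : ℝ) 1,
    (κ : ℝ) * f ((k : ℝ) * (a + b) + a * x) = f x + c)

/-- `lam` is an eigenvalue of the Dirichlet problem `-y'' - λ ρ y = 0`, `y(0) = y(1) = 0`,
where `ρ` is the distributional derivative of the function whose Lebesgue–Stieltjes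
measure is `μ`. -/
def IsDirichletEigen (μ : Measure ℝ) (lam : ℝ) : Prop :=
  ∃ y g : ℝ → ℝ, ContinuousOn y (Set.Icc 0 1) ∧ ContinuousOn g (Set.Icc 0 1) ∧
    (∃ x ∈ Set.Icc (0 : ℝ) 1, y x ≠ 0) ∧
    (∀ x ∈ Set.Icc (0 : ℝ) 1, y x = y 0 + ∫ t in (0 : ℝ)..x, g t) ∧
    (∀ x ∈ Set.Icc (0 : ℝ) 1, g x = g 0 - lam * ∫ t in Set.Icc (0 : ℝ) x, y t ∂μ) ∧
    y 0 = 0 ∧ y 1 = 0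

noncomputable def chS : ℕ → ℝ → ℝ
  | 0, _ => 0
  | 1, _ => 1
  | (n+2), x => 2 * x * chS (n+1) x - chS n x

lemma chS_two (n : ℕ) (x : ℝ) : chS (n+2) x = 2 * x * chS (n+1) x - chS n x := by
  rw [chS]

lemma chS_zero (x : ℝ) : chS 0 x = 0 := by rw [chS]
lemma chS_one (x : ℝ) : chS 1 x = 1 := by rw [chS]

lemma chS_pair {p : ℕ → Prop} (h : ∀ n, p n ∧ p (n+1)) (n : ℕ) : p n := (h n).1

lemma chS_cos (n : ℕ) (θ : ℝ) : chS n (Real.cos θ) * Real.sin θ = Real.sin (n * θ) := by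
  have h : ∀ n : ℕ, chS n (Real.cos θ) * Real.sin θ = Real.sin (n * θ) ∧
      chS (n+1) (Real.cos θ) * Real.sin θ = Real.sin ((n+1 : ℕ) * θ) := by
    intro n
    induction n with
    | zero => simp [chS_zero, chS_one]
    | succ n ih =>
      refine ⟨ih.2, ?_⟩
      rw [chS_two, sub_mul, mul_assoc, ih.1, ih.2]
      have e1 : ((n+1+1 : ℕ) : ℝ) * θ = ((n+1:ℕ):ℝ) * θ + θ := by push_cast; ring
      have e2 : ((n : ℕ) : ℝ) * θ = ((n+1:ℕ):ℝ) * θ - θ := by push_cast; ring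
      rw [e1, e2, Real.sin_add, Real.sin_sub]; ring
  exact (h n).1

lemma chS_at_one (n : ℕ) : chS n 1 = n := by
  have h : ∀ n : ℕ, chS n 1 = n ∧ chS (n+1) 1 = (n+1 : ℕ) := by
    intro n
    induction n with
    | zero => simp [chS_zero, chS_one]
    | succ n ih =>
      refine ⟨ih.2, ?_⟩
      rw [chS_two, ih.1, ih.2]; push_cast; ring
  exact (h n).1

lemma chS_at_neg_one (n : ℕ) : chS n (-1) = -((-1) ^ n * n) := by
  have h : ∀ n : ℕ, chS n (-1) = -((-1) ^ n * n) ∧ chS (n+1) (-1) = -((-1) ^ (n+1) * (n+1 : ℕ)) := by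
    intro n
    induction n with
    | zero => simp [chS_zero, chS_one]
    | succ n ih =>
      refine ⟨ih.2, ?_⟩
      rw [chS_two, ih.1, ih.2]; push_cast; ring
  exact (h n).1

lemma chS_neg (n : ℕ) (x : ℝ) : chS n (-x) = -((-1) ^ n * chS n x) := by
  have h : ∀ n : ℕ, chS n (-x) = -((-1) ^ n * chS n x) ∧
      chS (n+1) (-x) = -((-1) ^ (n+1) * chS (n+1) x) := by
    intro n
    induction n with
    | zero => simp [chS_zero, chS_one]
    | succ n ih =>
      refine ⟨ih.2, ?_⟩
      rw [chS_two, chS_two, ih.1, ih.2]; ring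
  exact (h n).1

lemma chS_continuous (n : ℕ) : Continuous (chS n) := by
  have h : ∀ n : ℕ, Continuous (chS n) ∧ Continuous (chS (n+1)) := by
    intro n
    induction n with
    | zero =>
      refine ⟨?_, ?_⟩
      · have : chS 0 = fun _ => 0 := funext chS_zero
        rw [this]; exact continuous_const
      · have : chS (0+1) = fun _ => 1 := funext chS_one
        rw [this]; exact continuous_const
    | succ n ih =>
      refine ⟨ih.2, ?_⟩
      have : chS (n+1+1) = fun x => 2 * x * chS (n+1) x - chS n x := funext (chS_two n)
      rw [this]
      have := ih.1
      have := ih.2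
      fun_prop
  exact (h n).1

/-- Transfer data. -/
structure TMat (κ : ℕ) (a b : ℝ) where
  A : ℝ → ℝ
  B : ℝ → ℝ
  C : ℝ → ℝ
  cA : Continuous A
  cB : Continuous B
  cC : Continuous C
  det : ∀ l, A l ^ 2 - B l * C l = 1
  recA : ∀ l, A (κ / a * l) = chS κ (A l + b / (2 * a) * C l) * A l
    - chS (κ - 1) (A l + b / (2 * a) * C l)
  recB : ∀ l, B (κ / a * l) = chS κ (A l + b / (2 * a) * C l) * (a * B l)
    + b * chS (κ - 1) (A l + b / (2 * a) * C l)
  recC : ∀ l, C (κ / a * l) = chS κ (A l + b / (2 * a) * C l) * (C l / a)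
  A0 : A 0 = 1
  B0 : B 0 = 1
  C0 : C 0 = 0
  near : ∀ p, C p = 0 → ∃ h : ℝ → ℝ, ContinuousAt h p ∧ 0 < h p ∧
    ∀ l, C l * A p = (p - l) * h l

namespace TMat
variable {κ : ℕ} {a b : ℝ} (M : TMat κ a b)

noncomputable def T (l : ℝ) : ℝ := M.A l + b / (2 * a) * M.C l

lemma cT : Continuous M.T := by
  have := M.cA
  have := M.cC
  unfold T; fun_prop

lemma lift_zero (hκ : 2 ≤ κ) {u σ : ℝ} (hσ : σ = 1 ∨ σ = -1) (hC : M.C u = 0) (hA : M.A u = σ) :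
    M.C (κ / a * u) = 0 ∧ M.A (κ / a * u) = σ ^ κ := by
  refine ⟨by rw [M.recC, hC]; simp, ?_⟩
  obtain ⟨n, rfl⟩ : ∃ n, κ = n + 1 := ⟨κ - 1, by omega⟩
  rw [M.recA, hC, hA]
  rcases hσ with rfl | rfl
  · simp [chS_at_one]
  · simp [chS_at_neg_one]; ring

lemma lift_zero_iter (hκ : 2 ≤ κ) {u σ : ℝ} (hσ : σ = 1 ∨ σ = -1) (hC : M.C u = 0)
    (hA : M.A u = σ) (i : ℕ) :
    M.C ((κ / a) ^ i * u) = 0 ∧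
      (M.A ((κ / a) ^ i * u) = 1 ∨ M.A ((κ / a) ^ i * u) = -1) := by
  induction i with
  | zero => simpa [hC, hA] using hσ
  | succ i ih =>
    have := M.lift_zero hκ ih.2 ih.1 rfl
    rw [pow_succ', mul_assoc]
    refine ⟨this.1, ?_⟩
    rw [this.2]
    rcases ih.2 with h | h <;> rw [h]
    · simp
    · exact neg_one_pow_eq_or ℝ κ

lemma cheb_aux (hκ : 2 ≤ κ) {l : ℕ} (h0 : 0 < l) (h1 : l < κ) :
    chS κ (Real.cos (Real.pi * l / κ)) = 0 ∧
    chS (κ-1) (Real.cos (Real.pi * l / κ)) = -(-1) ^ l := by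
  have hκ0 : (0:ℝ) < κ := by positivity
  have hs : 0 < Real.sin (Real.pi * l / κ) := by
    apply Real.sin_pos_of_pos_of_lt_pi
    · have : (0:ℝ) < l := by exact_mod_cast h0
      positivity
    · rw [div_lt_iff₀ hκ0]
      have : (l:ℝ) < κ := by exact_mod_cast h1
      nlinarith [Real.pi_pos]
  have e1 := chS_cos κ (Real.pi * l / κ)
  have e2 := chS_cos (κ-1) (Real.pi * l / κ)
  have f1 : (κ:ℝ) * (Real.pi * l / κ) = l * Real.pi := by field_simp
  have f2 : ((κ-1 : ℕ):ℝ) * (Real.pi * l / κ) = l * Real.pi - Real.pi * l / κ := by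
    rw [Nat.cast_sub (by omega)]; push_cast; field_simp
  rw [f1, Real.sin_nat_mul_pi] at e1
  rw [f2, Real.sin_sub, Real.sin_nat_mul_pi, Real.cos_nat_mul_pi] at e2
  constructor
  · rcases mul_eq_zero.1 e1 with h | h
    · exact h
    · exact absurd h hs.ne'
  · have : (chS (κ-1) (Real.cos (Real.pi * l / κ)) + (-1)^l) * Real.sin (Real.pi * l / κ) = 0 := by
      linarith
    rcases mul_eq_zero.1 this with h | h
    · linarith
    · exact absurd h hs.ne'

lemma lift_cos (hκ : 2 ≤ κ) {u : ℝ} {l : ℕ} (h0 : 0 < l) (h1 : l < κ)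
    (hT : M.T u = Real.cos (Real.pi * l / κ)) :
    M.C (κ / a * u) = 0 ∧ M.A (κ / a * u) = (-1) ^ l ∧ M.B (κ / a * u) = - b * (-1) ^ l := by
  have ⟨e1, e2⟩ := cheb_aux hκ h0 h1
  rw [M.recC, M.recA, M.recB]
  unfold T at hT
  rw [hT, e1, e2]
  refine ⟨by ring, by ring, by ring⟩

/-- signed version -/
lemma lift_cos' (hκ : 2 ≤ κ) {u σ : ℝ} (hσ : σ = 1 ∨ σ = -1) {l : ℕ} (h0 : 0 < l) (h1 : l < κ)
    (hT : M.T u = σ * Real.cos (Real.pi * l / κ)) :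
    M.C (κ / a * u) = 0 ∧ M.A (κ / a * u) = σ ^ κ * (-1) ^ l ∧
      M.B (κ / a * u) = - b * (σ ^ κ * (-1) ^ l) := by
  have hκ0 : (0:ℝ) < κ := by positivity
  rcases hσ with rfl | rfl
  · simpa using M.lift_cos hκ h0 h1 (by simpa using hT)
  · have h2 : M.T u = Real.cos (Real.pi * (κ - l : ℕ) / κ) := by
      rw [hT, Nat.cast_sub h1.le]
      have : Real.pi * ((κ:ℝ) - l) / κ = Real.pi - Real.pi * l / κ := by field_simp
      rw [this, Real.cos_pi_sub]; ring
    have h3 := M.lift_cos hκ (by omega) (by omega) h2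
    have h4 : (-1:ℝ) ^ (κ - l) = (-1) ^ κ * (-1) ^ l := by
      obtain ⟨m, rfl⟩ := Nat.exists_eq_add_of_lt h1
      have : l + m + 1 - l = m + 1 := by omega
      rw [this]
      have : ((-1:ℝ) ^ l) * (-1)^l = 1 := by rw [← mul_pow]; simp
      calc (-1:ℝ)^(m+1) = (-1)^(m+1) * ((-1)^l * (-1)^l) := by rw [this, mul_one]
        _ = _ := by ring
    rwa [h4] at h3

structure Good (u v : ℝ) : Prop where
  nn : 0 ≤ u
  le : u ≤ v
  Cu : M.C u = 0
  Cv : M.C v = 0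
  Au : M.A u = 1 ∨ M.A u = -1
  Av : M.A v = - M.A u

lemma ivt {f : ℝ → ℝ} (hf : Continuous f) {u v σ x : ℝ} (hσ : σ = 1 ∨ σ = -1) (huv : u ≤ v)
    (h1 : x ≤ σ * f u) (h2 : σ * f v ≤ x) : ∃ q ∈ Set.Icc u v, f q = σ * x := by
  have := intermediate_value_Icc' huv (f := fun t => σ * f t) (by fun_prop)
  obtain ⟨q, hq, h⟩ := this ⟨h2, h1⟩
  refine ⟨q, hq, ?_⟩
  simp only at h
  rw [← h]
  rcases hσ with rfl | rfl <;> ring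

lemma sq_sign {σ : ℝ} (hσ : σ = 1 ∨ σ = -1) : σ * σ = 1 := by rcases hσ with rfl | rfl <;> norm_num

lemma sign_pow {σ : ℝ} (hσ : σ = 1 ∨ σ = -1) (n : ℕ) : σ ^ n = 1 ∨ σ ^ n = -1 := by
  rcases hσ with rfl | rfl
  · simp
  · exact neg_one_pow_eq_or ℝ n

lemma cos_step {κ i j : ℕ} (hκ : 0 < κ) (h : i ≤ j) (hj : j ≤ κ) :
    Real.cos (Real.pi * j / κ) ≤ Real.cos (Real.pi * i / κ) := by
  have hκ0 : (0:ℝ) < κ := by positivity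
  apply Real.cos_le_cos_of_nonneg_of_le_pi
  · positivity
  · rw [div_le_iff₀ hκ0]
    have : (j:ℝ) ≤ κ := by exact_mod_cast hj
    nlinarith [Real.pi_pos]
  · have : (i:ℝ) ≤ j := by exact_mod_cast h
    gcongr

lemma Good.zeroB (hκ : 2 ≤ κ) (ha : 0 < a) (hb : 0 < b) {u v : ℝ} (h : M.Good u v) :
    ∃ l, κ / a * u < l ∧ l ≤ κ / a * v ∧ M.B l = 0 := by
  have hκ0 : (0:ℝ) < κ := by positivity
  have hr : 0 < κ / a := by positivity
  obtain ⟨σ, hσd⟩ : ∃ σ, σ = M.A u := ⟨_, rfl⟩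
  have hσ : σ = 1 ∨ σ = -1 := by rw [hσd]; exact h.Au
  have hAv : M.A v = -σ := by rw [hσd]; exact h.Av
  have hσ2 := sq_sign hσ
  rcases hκ.eq_or_lt with h2 | h3
  · subst h2
    obtain ⟨q, hq, hq0⟩ := ivt M.cA (x := 0) hσ h.le (by rw [← hσd, hσ2]; norm_num)
      (by rw [hAv]; nlinarith)
    simp only [mul_zero] at hq0
    refine ⟨_, ?_, mul_le_mul_of_nonneg_left hq.2 hr.le, ?_⟩
    · apply mul_lt_mul_of_pos_left _ hr
      apply lt_of_le_of_ne hq.1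
      rintro rfl
      rw [← hσd] at hq0
      rw [hq0] at hσ2; norm_num at hσ2
    · have := M.det q
      rw [M.recB, hq0]
      have e : chS 2 (0 + b / (2 * a) * M.C q) = 2 * (b / (2 * a) * M.C q) := by
        rw [chS_two, chS_one, chS_zero]; ring
      rw [e]
      simp only [Nat.add_one_sub_one, chS_one]
      rw [hq0] at this
      field_simp
      linear_combination (-b) * this
  · have hTu : M.T u = σ := by unfold T; rw [h.Cu]; simp [hσd]
    have hTv : M.T v = -σ := by unfold T; rw [h.Cv, hAv]; simp
    obtain ⟨q1, hq1, e1⟩ := ivt M.cT (x := Real.cos (Real.pi * (1:ℕ) / κ)) hσ h.le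
      (by rw [hTu, hσ2]; exact Real.cos_le_one _)
      (by rw [hTv]; rw [mul_neg, hσ2]; exact Real.neg_one_le_cos _)
    obtain ⟨q2, hq2, e2⟩ := ivt M.cT (x := Real.cos (Real.pi * (2:ℕ) / κ)) hσ hq1.2
      (by rw [e1, ← mul_assoc, hσ2, one_mul]; exact cos_step (by omega) (by omega) (by omega))
      (by rw [hTv]; rw [mul_neg, hσ2]; exact Real.neg_one_le_cos _)
    have f1 := (M.lift_cos' hκ hσ (by omega) (by omega) e1).2.2
    have f2 := (M.lift_cos' hκ hσ (by omega) (by omega) e2).2.2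
    have hs := sign_pow hσ κ
    have hs2 := sq_sign hs
    obtain ⟨l, hl, hl0⟩ := ivt M.cB (u := κ / a * q1) (v := κ / a * q2) (x := 0) hs
      (mul_le_mul_of_nonneg_left hq2.1 hr.le)
      (by rw [f1]; nlinarith) (by rw [f2]; nlinarith)
    simp only [mul_zero] at hl0
    refine ⟨l, ?_, ?_, hl0⟩
    · have : κ / a * q1 < l := by
        apply lt_of_le_of_ne hl.1
        rintro rfl
        rw [f1] at hl0
        rcases hs with h | h <;> rw [h] at hl0 <;> norm_num at hl0 <;> exact hb.ne' hl0
      exact lt_of_le_of_lt (mul_le_mul_of_nonneg_left hq1.1 hr.le) this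
    · exact hl.2.trans (mul_le_mul_of_nonneg_left hq2.2 hr.le)

lemma Good.count (hκ : 2 ≤ κ) (ha : 0 < a) (hb : 0 < b) {N : ℝ → ℝ}
    (hN : ∀ u v l, 0 ≤ u → u < l → l ≤ v → M.B l = 0 → N u + 1 ≤ N v) (j : ℕ) :
    ∀ {u v : ℝ}, M.Good u v → N ((κ / a) ^ (j+1) * u) + (κ:ℝ) ^ j ≤ N ((κ / a) ^ (j+1) * v) := by
  have hκ0 : (0:ℝ) < κ := by positivity
  have hr : 0 < κ / a := by positivity
  induction j with
  | zero =>
    intro u v h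
    obtain ⟨l, h1, h2, h3⟩ := h.zeroB M hκ ha hb
    simpa using hN _ _ l (mul_nonneg hr.le h.nn) h1 h2 h3
  | succ j ih =>
    intro u v h
    obtain ⟨σ, hσd⟩ : ∃ σ, σ = M.A u := ⟨_, rfl⟩
    have hσ : σ = 1 ∨ σ = -1 := by rw [hσd]; exact h.Au
    have hAv : M.A v = -σ := by rw [hσd]; exact h.Av
    have hσ2 := sq_sign hσ
    have hTu : M.T u = σ := by unfold T; rw [h.Cu]; simp [hσd]
    have hTv : M.T v = -σ := by unfold T; rw [h.Cv, hAv]; simp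
    have hs := sign_pow hσ κ
    have key : ∀ i : ℕ, i < κ → ∃ q ∈ Set.Icc u v, M.T q = σ * Real.cos (Real.pi * i / κ) ∧
        M.C (κ / a * q) = 0 ∧ M.A (κ / a * q) = σ ^ κ * (-1) ^ i ∧
        N ((κ / a) ^ (j+1+1) * u) + i * (κ:ℝ)^j ≤ N ((κ / a) ^ (j+1+1) * q) := by
      intro i
      induction i with
      | zero =>
        intro _
        refine ⟨u, ⟨le_rfl, h.le⟩, by simpa using hTu, ?_⟩
        have := M.lift_zero hκ hσ h.Cu hσd.symm
        exact ⟨this.1, by simpa using this.2, by simp⟩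
      | succ i ihi =>
        intro hi
        obtain ⟨q, hq, e, eC, eA, hc⟩ := ihi (by omega)
        obtain ⟨q', hq', e'⟩ := ivt M.cT (x := Real.cos (Real.pi * (i+1:ℕ) / κ)) hσ hq.2
          (by rw [e, ← mul_assoc, hσ2, one_mul]; exact cos_step (by omega) (by omega) (by omega))
          (by rw [hTv]; rw [mul_neg, hσ2]; exact Real.neg_one_le_cos _)
        have f := M.lift_cos' hκ hσ (by omega) hi e'
        refine ⟨q', ⟨hq.1.trans hq'.1, hq'.2⟩, e', f.1, f.2.1, ?_⟩
        have hg : M.Good (κ / a * q) (κ / a * q') :=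
          ⟨mul_nonneg hr.le (h.nn.trans hq.1), mul_le_mul_of_nonneg_left hq'.1 hr.le, eC, f.1,
            by rw [eA]
               rcases hs with h | h <;> rcases neg_one_pow_eq_or ℝ i with h' | h' <;>
                rw [h, h'] <;> norm_num,
            by rw [eA, f.2.1]; ring⟩
        have := ih hg
        rw [← mul_assoc, ← mul_assoc, ← pow_succ] at this
        push_cast
        linarith
    obtain ⟨q, hq, e, eC, eA, hc⟩ := key (κ - 1) (by omega)
    have f := M.lift_zero hκ (σ := -σ) (by rcases hσ with h | h <;> rw [h] <;> norm_num) h.Cv hAv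
    have hg : M.Good (κ / a * q) (κ / a * v) :=
      ⟨mul_nonneg hr.le (h.nn.trans hq.1), mul_le_mul_of_nonneg_left hq.2 hr.le, eC, f.1,
        by rw [eA]
           rcases hs with h | h <;> rcases neg_one_pow_eq_or ℝ (κ-1) with h' | h' <;>
            rw [h, h'] <;> norm_num,
        by rw [eA, f.2]
           obtain ⟨n, rfl⟩ : ∃ n, κ = n + 1 := ⟨κ - 1, by omega⟩
           rw [neg_pow]; simp; ring⟩
    have := ih hg
    rw [← mul_assoc, ← mul_assoc, ← pow_succ] at this
    rw [Nat.cast_sub (by omega)] at hc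
    push_cast at hc
    have e3 : (κ:ℝ)^(j+1) = (κ - 1) * κ^j + κ^j := by ring
    rw [e3]; linarith

/-- one-step dynamics -/
lemma dyn (hκ : 2 ≤ κ) (ha : 0 < a) (ha1 : a < 1) (hb : 0 < b) {w σ θ : ℝ}
    (hσ : σ = 1 ∨ σ = -1)
    (hC : σ * M.C w ≤ 0) (hT1 : Real.cos (Real.pi / κ) < σ * M.T w)
    (hT2 : σ * M.T w ≤ Real.cos θ) (hθ : 0 < θ) (hθ2 : θ ≤ Real.pi / κ) :
    σ ^ κ * M.C (κ / a * w) ≤ 0 ∧ σ ^ κ * M.T (κ / a * w) ≤ Real.cos (κ * θ) := by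
  have hκ0 : (0:ℝ) < κ := by positivity
  have hκ2 : (2:ℝ) ≤ κ := by exact_mod_cast hκ
  have hσ2 := sq_sign hσ
  set φ := Real.arccos (σ * M.T w) with hφ
  have hcφ : Real.cos φ = σ * M.T w := by
    apply Real.cos_arccos
    · linarith [Real.neg_one_le_cos (Real.pi / κ)]
    · linarith [Real.cos_le_one θ]
  have hpk : Real.pi / κ ≤ Real.pi := by
    rw [div_le_iff₀ hκ0]; nlinarith [Real.pi_pos]
  have hφ1 : θ ≤ φ := by
    by_contra hlt
    push Not at hlt
    have := Real.cos_lt_cos_of_nonneg_of_le_pi (Real.arccos_nonneg _) (hθ2.trans hpk) hlt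
    linarith
  have hφ2 : φ < Real.pi / κ := by
    by_contra hlt
    push Not at hlt
    have := Real.cos_le_cos_of_nonneg_of_le_pi (by positivity) (Real.arccos_le_pi _) hlt
    linarith
  have hsin : 0 < Real.sin φ := Real.sin_pos_of_pos_of_lt_pi (by linarith) (by linarith)
  have hκφ : κ * φ ≤ Real.pi := by
    rw [lt_div_iff₀ hκ0] at hφ2; linarith
  have hS1 : 0 ≤ chS κ (σ * M.T w) := by
    have := chS_cos κ φ
    rw [hcφ] at this
    have h2 : 0 ≤ Real.sin (κ * φ) := Real.sin_nonneg_of_nonneg_of_le_pi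
      (by have : 0 ≤ φ := Real.arccos_nonneg _
          positivity) hκφ
    rw [← this] at h2
    exact nonneg_of_mul_nonneg_left h2 hsin
  have hS2 : chS κ (σ * M.T w) * (σ * M.T w) - chS (κ-1) (σ * M.T w) = Real.cos (κ * φ) := by
    have e1 := chS_cos κ φ
    have e2 := chS_cos (κ-1) φ
    rw [hcφ] at e1 e2
    rw [Nat.cast_sub (by omega), sub_mul] at e2
    push_cast at e2
    rw [one_mul, Real.sin_sub, ← e1, hcφ] at e2
    have : (chS κ (σ * M.T w) * (σ * M.T w) - chS (κ-1) (σ * M.T w) - Real.cos (κ * φ))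
       * Real.sin φ = 0 := by linarith
    rcases mul_eq_zero.1 this with h | h
    · linarith
    · exact absurd h hsin.ne'
  have hpar1 : σ ^ κ * chS κ (M.T w) = σ * chS κ (σ * M.T w) := by
    rcases hσ with rfl | rfl
    · simp
    · rw [neg_one_mul (M.T w), chS_neg]; ring
  have hpar2 : σ ^ κ * chS (κ-1) (M.T w) = chS (κ-1) (σ * M.T w) := by
    rcases hσ with rfl | rfl
    · simp
    · rw [neg_one_mul (M.T w), chS_neg]
      obtain ⟨n, rfl⟩ : ∃ n, κ = n + 1 := ⟨κ - 1, by omega⟩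
      simp; ring
  have eC : σ ^ κ * M.C (κ / a * w) = chS κ (σ * M.T w) * (σ * M.C w) / a := by
    rw [M.recC]
    calc _ = (σ ^ κ * chS κ (M.T w)) * (M.C w / a) := by unfold T; ring
      _ = _ := by rw [hpar1]; ring
  have hC' : σ ^ κ * M.C (κ / a * w) ≤ 0 := by
    rw [eC]
    exact div_nonpos_of_nonpos_of_nonneg (mul_nonpos_of_nonneg_of_nonpos hS1 hC) ha.le
  refine ⟨hC', ?_⟩
  have eA : σ ^ κ * M.A (κ / a * w) = chS κ (σ * M.T w) * (σ * M.A w) - chS (κ-1) (σ * M.T w) := by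
    rw [M.recA]
    calc _ = (σ ^ κ * chS κ (M.T w)) * M.A w - σ ^ κ * chS (κ-1) (M.T w) := by unfold T; ring
      _ = _ := by rw [hpar1, hpar2]; ring
  have eT : σ ^ κ * M.T (κ / a * w) = Real.cos (κ * φ)
      + b / (2 * a) * (1 / a - 1) * (chS κ (σ * M.T w) * (σ * M.C w)) := by
    rw [← hS2]
    calc _ = σ ^ κ * M.A (κ / a * w) + b / (2 * a) * (σ ^ κ * M.C (κ / a * w)) := by
          rw [T]; ring
      _ = _ := by
          rw [eA, eC]
          have : σ * M.A w = σ * M.T w - b / (2 * a) * (σ * M.C w) := by unfold T; ring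
          rw [this]; ring
  have h5 : Real.cos (κ * φ) ≤ Real.cos (κ * θ) := by
    apply Real.cos_le_cos_of_nonneg_of_le_pi (by positivity) hκφ
    gcongr
  have h6 : 0 < b / (2 * a) * (1 / a - 1) := by
    have : 1 < 1 / a := by rw [lt_div_iff₀ ha]; linarith
    have : 0 < 1 / a - 1 := by linarith
    positivity
  rw [eT]
  have : chS κ (σ * M.T w) * (σ * M.C w) ≤ 0 := mul_nonpos_of_nonneg_of_nonpos hS1 hC
  nlinarith

lemma dyn_iter (hκ : 2 ≤ κ) (ha : 0 < a) (ha1 : a < 1) (hb : 0 < b) (m : ℕ) :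
    ∀ {u w σ : ℝ}, (σ = 1 ∨ σ = -1) → u ≤ w → M.C u = 0 → M.A u = σ →
    σ * M.C w ≤ 0 → σ * M.T w ≤ Real.cos (Real.pi / κ / κ ^ m) →
    ∃ i ≤ m, ∃ q ∈ Set.Icc u w,
      M.T ((κ / a) ^ i * q) = M.A ((κ / a) ^ i * u) * Real.cos (Real.pi / κ) := by
  have hκ0 : (0:ℝ) < κ := by positivity
  have hκ2 : (2:ℝ) ≤ κ := by exact_mod_cast hκ
  have hr : 0 < κ / a := by positivity
  have imm : ∀ {u w σ : ℝ}, (σ = 1 ∨ σ = -1) → u ≤ w → M.C u = 0 → M.A u = σ →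
      σ * M.T w ≤ Real.cos (Real.pi / κ) → ∃ q ∈ Set.Icc u w,
      M.T q = σ * Real.cos (Real.pi / κ) := by
    intro u w σ hσ huw hC hA hT
    refine ivt M.cT hσ huw ?_ hT
    have : M.T u = σ := by unfold T; rw [hC, hA]; ring
    rw [this, sq_sign hσ]; exact Real.cos_le_one _
  induction m with
  | zero =>
    intro u w σ hσ huw hC hA hCw hT
    obtain ⟨q, hq, e⟩ := imm hσ huw hC hA (by simpa using hT)
    exact ⟨0, le_rfl, q, hq, by simpa [hA] using e⟩
  | succ m ih =>
    intro u w σ hσ huw hC hA hCw hT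
    by_cases hc : σ * M.T w ≤ Real.cos (Real.pi / κ)
    · obtain ⟨q, hq, e⟩ := imm hσ huw hC hA hc
      exact ⟨0, by omega, q, hq, by simpa [hA] using e⟩
    · push Not at hc
      have hd := M.dyn hκ ha ha1 hb hσ hCw hc hT (by positivity)
        (div_le_self (by positivity) (one_le_pow₀ (by linarith)))
      have e1 : (κ:ℝ) * (Real.pi / κ / κ ^ (m+1)) = Real.pi / κ / κ ^ m := by
        rw [pow_succ]; field_simp
      rw [e1] at hd
      have hl := M.lift_zero hκ hσ hC hA
      obtain ⟨i, hi, q, hq, e⟩ := ih (sign_pow hσ κ) (mul_le_mul_of_nonneg_left huw hr.le)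
        hl.1 hl.2 hd.1 hd.2
      refine ⟨i+1, by omega, q / (κ / a), ⟨?_, ?_⟩, ?_⟩
      · rw [le_div_iff₀ hr]; linarith [hq.1]
      · rw [div_le_iff₀ hr]; linarith [hq.2]
      · have e2 : (κ / a) ^ (i+1) * (q / (κ / a)) = (κ / a) ^ i * q := by
          rw [pow_succ]; field_simp
        have e3 : (κ / a) ^ (i+1) * u = (κ / a) ^ i * (κ / a * u) := by ring
        rw [e2, e3]; exact e

lemma near' (ha : 0 < a) (hb : 0 < b) {p σ : ℝ} (hσ : σ = 1 ∨ σ = -1) (hC : M.C p = 0)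
    (hA : M.A p = σ) (hB : 0 < σ * M.B p) :
    ∃ k > 0, ∃ ε₀ > 0, ∀ ε, 0 ≤ ε → ε ≤ ε₀ → σ * M.C (p + ε) ≤ 0 ∧
      σ * M.T (p + ε) ≤ 1 - k * ε := by
  obtain ⟨h, hc, hp, hh⟩ := M.near p hC
  have ev1 : ∀ᶠ l in nhds p, h p / 2 < h l := hc.eventually (lt_mem_nhds (by linarith))
  have cB := M.cB
  have ev2 : ∀ᶠ l in nhds p, 0 < σ * M.B l :=
    (show Continuous fun l => σ * M.B l by fun_prop).continuousAt.eventually (lt_mem_nhds hB)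
  obtain ⟨δ, hδ, hball⟩ := Metric.eventually_nhds_iff.1 (ev1.and ev2)
  refine ⟨b / (2 * a) * (h p / 2), by positivity, δ / 2, by positivity, ?_⟩
  intro ε h0 h1
  obtain ⟨g1, g2⟩ := hball (y := p + ε) (by rw [Real.dist_eq]; simp [abs_of_nonneg h0]; linarith)
  have e := hh (p + ε)
  rw [hA] at e
  have hCle : σ * M.C (p + ε) ≤ - (h p / 2) * ε := by nlinarith
  have hC0 : σ * M.C (p + ε) ≤ 0 := by nlinarith
  refine ⟨hC0, ?_⟩
  have hd := M.det (p + ε)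
  have hσ2 := sq_sign hσ
  have hBC : M.B (p+ε) * M.C (p+ε) ≤ 0 := by
    have : M.B (p+ε) * M.C (p+ε) = (σ * M.B (p+ε)) * (σ * M.C (p+ε)) := by
      linear_combination (- M.B (p+ε) * M.C (p+ε)) * hσ2
    rw [this]; exact mul_nonpos_of_nonneg_of_nonpos g2.le hC0
  have hA1 : σ * M.A (p+ε) ≤ 1 := by
    have : (σ * M.A (p+ε)) ^ 2 ≤ 1 := by
      have : (σ * M.A (p+ε)) ^ 2 = M.A (p+ε) ^ 2 := by
        linear_combination (M.A (p+ε)^2) * hσ2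
      rw [this]; linarith
    exact (abs_le.1 ((sq_le_one_iff_abs_le_one _).1 this)).2
  have : σ * M.T (p+ε) = σ * M.A (p+ε) + b / (2 * a) * (σ * M.C (p+ε)) := by unfold T; ring
  rw [this]
  have h7 : 0 < b / (2 * a) := by positivity
  nlinarith

end TMat

--PART2
lemma TMat.main {κ : ℕ} {a b : ℝ} (M : TMat κ a b) (hκ : 2 ≤ κ) (ha : 0 < a)
    (ha' : κ * a < 1) (hb : 0 < b) {N : ℝ → ℝ}
    (hN : ∀ u v l, 0 ≤ u → u < l → l ≤ v → M.B l = 0 → N u + 1 ≤ N v)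
    {D c : ℝ} (hD0 : 0 < D) (hD1 : D ≤ 1) (hrD : (κ / a : ℝ) ^ D = κ)
    (hlim : Filter.Tendsto (fun L : ℝ => N L / L ^ D) Filter.atTop (nhds c)) : False := by
  have hκ0 : (0:ℝ) < κ := by positivity
  have hκ2 : (2:ℝ) ≤ κ := by exact_mod_cast hκ
  have hr : 0 < κ / a := by positivity
  have ha1 : a < 1 := by nlinarith
  have hr1 : 1 < κ / a := by rw [lt_div_iff₀ ha]; linarith
  -- consequence of asymptotics
  have lim : ∀ u, 0 < u → Filter.Tendsto (fun j : ℕ => N ((κ / a) ^ (j+1) * u) / (κ:ℝ) ^ (j+1))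
      Filter.atTop (nhds (c * u ^ D)) := by
    intro u hu
    have t1 : Filter.Tendsto (fun j : ℕ => (κ / a : ℝ) ^ (j+1) * u) Filter.atTop Filter.atTop :=
      Filter.Tendsto.atTop_mul_const hu
        ((tendsto_pow_atTop_atTop_of_one_lt hr1).comp (Filter.tendsto_add_atTop_nat 1))
    have t2 := (hlim.comp t1).mul_const (u ^ D)
    refine t2.congr ?_
    intro j
    simp only [Function.comp]
    have ee : ((κ / a : ℝ) ^ (j+1)) ^ D = (κ:ℝ) ^ (j+1) := by
      rw [← Real.rpow_natCast, ← Real.rpow_mul hr.le,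
        mul_comm ((j+1:ℕ):ℝ) D, Real.rpow_mul hr.le, hrD, Real.rpow_natCast]
    rw [Real.mul_rpow (by positivity) hu.le, ee]
    have : 0 < u ^ D := Real.rpow_pos_of_pos hu D
    field_simp
  have good : ∀ u v, 0 < u → M.Good u v → 1 / (κ:ℝ) ≤ c * v ^ D - c * u ^ D := by
    intro u v hu hg
    refine ge_of_tendsto' ((lim v (hu.trans_le hg.le)).sub (lim u hu)) ?_
    intro j
    have := hg.count M hκ ha hb hN j
    rw [← sub_div, le_div_iff₀ (by positivity)]
    have e : 1 / (κ:ℝ) * κ ^ (j+1) = κ ^ j := by rw [pow_succ]; field_simp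
    rw [e]; linarith
  -- angle sequence
  have cosb : ∀ x : ℝ, 1 - x ^ 2 / 2 ≤ Real.cos x := fun x => Real.one_sub_sq_div_two_le_cos
  have tend : Filter.Tendsto (fun m : ℕ => Real.pi / κ / (κ:ℝ) ^ m) Filter.atTop (nhds 0) :=
    Filter.Tendsto.div_atTop tendsto_const_nhds
      (tendsto_pow_atTop_atTop_of_one_lt (by linarith))
  -- first zero
  obtain ⟨p, hp0, hpC, hpA, hpB⟩ : ∃ p, 0 < p ∧ M.C p = 0 ∧ M.A p = -1 ∧ M.B p = b := by
    obtain ⟨k, hk, ε, hε, hh⟩ := M.near' ha hb (p := 0) (σ := 1) (Or.inl rfl) M.C0 M.A0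
      (by rw [M.B0]; norm_num)
    obtain ⟨g1, g2⟩ := hh ε hε.le le_rfl
    simp only [zero_add] at g1 g2
    have ev : ∀ᶠ m : ℕ in Filter.atTop, 1 - k * ε < Real.cos (Real.pi / κ / (κ:ℝ) ^ m) := by
      have := (Real.continuous_cos.tendsto 0).comp tend
      rw [Real.cos_zero] at this
      exact this.eventually (lt_mem_nhds (by nlinarith [mul_pos hk hε]))
    obtain ⟨m, hm⟩ := ev.exists
    obtain ⟨i, -, q, hq, e⟩ := M.dyn_iter hκ ha ha1 hb m (Or.inl rfl) hε.le M.C0 M.A0 g1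
      (g2.trans hm.le)
    rw [mul_zero, M.A0, one_mul] at e
    have := M.lift_cos hκ (l := 1) (by norm_num) (by omega) (by simpa using e)
    refine ⟨_, ?_, this.1, by simpa using this.2.1, by simpa using this.2.2⟩
    refine mul_pos hr (mul_pos (by positivity) (lt_of_le_of_ne hq.1 ?_))
    rintro rfl
    rw [mul_zero, TMat.T, M.A0, M.C0] at e
    have : Real.cos (Real.pi / κ) < Real.cos 0 := by
      apply Real.cos_lt_cos_of_nonneg_of_le_pi le_rfl _ (by positivity)
      rw [div_le_iff₀ hκ0]; nlinarith [Real.pi_pos]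
    rw [Real.cos_zero] at this
    linarith
  have l1 := M.lift_zero hκ (Or.inr rfl) hpC hpA
  have hσ := TMat.sign_pow (σ := -1) (Or.inr rfl) κ
  have hB1 : 0 < (-1:ℝ) ^ κ * M.B (κ / a * p) := by
    rw [M.recB, hpC, hpA, hpB]
    obtain ⟨n, rfl⟩ : ∃ n, κ = n + 1 := ⟨κ - 1, by omega⟩
    simp only [mul_zero, add_zero, Nat.add_one_sub_one, chS_at_neg_one]
    have e : (-1:ℝ) ^ n * (-1) ^ n = 1 := by rw [← mul_pow]; simp
    have e2 : (-1:ℝ) ^ (n+1) * (-((-1) ^ (n+1) * ((n+1 : ℕ):ℝ)) * (a * b) + b * -((-1) ^ n * n))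
        = b * (n - (n+1 : ℕ) * a) := by
      linear_combination (b * (n - (n+1 : ℕ) * a)) * e
    rw [e2]
    apply mul_pos hb
    push_cast at *
    linarith
  obtain ⟨k, hk, ε₀, hε₀, hh⟩ := M.near' ha hb hσ l1.1 l1.2 hB1
  obtain ⟨P, hP⟩ : ∃ P, P = κ / a * p := ⟨_, rfl⟩
  rw [← hP] at l1 hB1 hh
  have hP0 : 0 < P := by rw [hP]; positivity
  have lim2 : Filter.Tendsto (fun m : ℕ => (Real.pi / κ / (κ:ℝ) ^ m) ^ 2 / (2 * k)) Filter.atTop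
      (nhds 0) := by
    have := (tend.pow 2).div_const (2 * k)
    simpa using this
  have lim3 : Filter.Tendsto (fun m : ℕ => (Real.pi / κ) * (Real.pi / κ / (κ:ℝ) ^ m) / (2 * k)
      * (|c| * P ^ D / P) * κ) Filter.atTop (nhds 0) := by
    have := (((tend.const_mul (Real.pi / κ)).div_const (2 * k)).mul_const
      (|c| * P ^ D / P)).mul_const (κ : ℝ)
    simpa using this
  obtain ⟨m, hm1, hm2⟩ := ((lim2.eventually (gt_mem_nhds hε₀)).and
    (lim3.eventually (gt_mem_nhds (show (0:ℝ) < 1 / κ by positivity)))).exists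
  obtain ⟨θ, hθ⟩ : ∃ θ, θ = Real.pi / κ / (κ:ℝ) ^ m := ⟨_, rfl⟩
  obtain ⟨ε, hε⟩ : ∃ ε, ε = θ ^ 2 / (2 * k) := ⟨_, rfl⟩
  rw [← hθ] at hm1 hm2
  rw [← hε] at hm1
  have hε0 : 0 ≤ ε := by rw [hε]; positivity
  obtain ⟨g1, g2⟩ := hh ε hε0 hm1.le
  have g3 : (-1:ℝ) ^ κ * M.T (P + ε) ≤ Real.cos (Real.pi / κ / (κ:ℝ) ^ m) := by
    rw [← hθ]
    refine g2.trans (le_trans (le_of_eq ?_) (cosb θ))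
    rw [hε]; field_simp
  obtain ⟨i, him, q, hq, e⟩ := M.dyn_iter hκ ha ha1 hb m hσ (by linarith) l1.1 l1.2 g1 g3
  have li := M.lift_zero_iter hκ hσ l1.1 l1.2 i
  have li' := M.lift_zero hκ li.2 li.1 rfl
  have lq := M.lift_cos' hκ li.2 (l := 1) (by norm_num) (by omega) (by simpa using e)
  have hq0 : 0 < q := hP0.trans_le hq.1
  have gd := good (κ / a * ((κ / a) ^ i * P)) (κ / a * ((κ / a) ^ i * q)) (by positivity)
    ⟨by positivity, by have := hq.1; gcongr, li'.1, lq.1, by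
      rw [li'.2]; exact TMat.sign_pow li.2 κ, by rw [lq.2.1, li'.2]; ring⟩
  have ep : ∀ x, 0 < x → (κ / a * ((κ / a) ^ i * x)) ^ D = (κ:ℝ) ^ (i+1) * x ^ D := by
    intro x hx
    rw [← mul_assoc, ← pow_succ', Real.mul_rpow (by positivity) hx.le, ← Real.rpow_natCast,
      ← Real.rpow_mul hr.le,
      mul_comm ((i+1:ℕ):ℝ) D, Real.rpow_mul hr.le, hrD, Real.rpow_natCast]
  rw [ep _ hP0, ep _ hq0] at gd
  have hPD : 0 < P ^ D := Real.rpow_pos_of_pos hP0 D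
  have b1 : P ^ D ≤ q ^ D := Real.rpow_le_rpow hP0.le hq.1 hD0.le
  have b2 : q ^ D ≤ P ^ D * (1 + ε / P) := by
    have e1 : q ≤ P * (1 + ε / P) := by
      have : P * (1 + ε / P) = P + ε := by field_simp
      rw [this]; exact hq.2
    have e2 : 1 ≤ 1 + ε / P := by
      have : 0 ≤ ε / P := by positivity
      linarith
    calc q ^ D ≤ (P * (1 + ε / P)) ^ D := Real.rpow_le_rpow hq0.le e1 hD0.le
      _ = P ^ D * (1 + ε / P) ^ D := Real.mul_rpow hP0.le (by linarith)
      _ ≤ P ^ D * (1 + ε / P) := by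
        apply mul_le_mul_of_nonneg_left _ hPD.le
        calc _ ≤ (1 + ε / P) ^ (1:ℝ) := Real.rpow_le_rpow_of_exponent_le e2 hD1
          _ = _ := Real.rpow_one _
  have b3 : q ^ D - P ^ D ≤ P ^ D * (ε / P) := by linarith
  have b4 : (κ:ℝ) ^ (i+1) ≤ κ ^ (m+1) := pow_le_pow_right₀ (by linarith) (by omega)
  have b5 : 1 / (κ:ℝ) ≤ |c| * (κ ^ (m+1) * (P ^ D * (ε / P))) := by
    calc 1 / (κ:ℝ) ≤ c * (κ ^ (i+1) * (q ^ D - P ^ D)) := by linarith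
      _ ≤ |c| * (κ ^ (i+1) * (q ^ D - P ^ D)) := by
        apply mul_le_mul_of_nonneg_right (le_abs_self c)
        have : 0 ≤ q ^ D - P ^ D := by linarith
        positivity
      _ ≤ |c| * (κ ^ (m+1) * (P ^ D * (ε / P))) := by
        have : 0 ≤ q ^ D - P ^ D := by linarith
        gcongr
  have b6 : |c| * (κ ^ (m+1) * (P ^ D * (ε / P))) =
      Real.pi / κ * θ / (2 * k) * (|c| * P ^ D / P) * κ := by
    have : (κ:ℝ) ^ m * θ = Real.pi / κ := by rw [hθ]; field_simp
    rw [← this, hε]; ring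
  linarith

open BoundedContinuousFunction in
/-- clamp to the unit interval -/
noncomputable def cl (x : ℝ) : ℝ := max 0 (min x 1)

lemma cl_nonneg (x : ℝ) : 0 ≤ cl x := le_max_left _ _
lemma cl_le_one (x : ℝ) : cl x ≤ 1 := max_le zero_le_one (min_le_right _ _)
lemma cl_of_mem {x : ℝ} (h0 : 0 ≤ x) (h1 : x ≤ 1) : cl x = x := by
  unfold cl; rw [min_eq_left h1, max_eq_right h0]
lemma cl_continuous : Continuous cl := by unfold cl; fun_prop

noncomputable def kk (x t : ℝ) : ℝ := max (cl x - cl t) 0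

lemma kk_nonneg (x t : ℝ) : 0 ≤ kk x t := le_max_right _ _
lemma kk_le (x t : ℝ) : kk x t ≤ 1 :=
  max_le (by linarith [cl_nonneg t, cl_le_one x]) zero_le_one
lemma kk_continuous : Continuous fun p : ℝ × ℝ => kk p.1 p.2 := by
  unfold kk; have := cl_continuous; fun_prop
lemma kk_sub (x t : ℝ) : kk x t = kk t x + cl x - cl t := by
  unfold kk
  rcases le_total (cl x) (cl t) with h | h
  · rw [max_eq_right (by linarith), max_eq_left (by linarith)]; ring
  · rw [max_eq_left (by linarith), max_eq_right (by linarith)]; ring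
lemma kk_one (t : ℝ) : kk 1 t = 1 - cl t := by
  unfold kk; rw [cl_of_mem zero_le_one le_rfl, max_eq_left (by linarith [cl_le_one t])]
lemma kk_zero (t : ℝ) : kk 0 t = 0 := by
  unfold kk; rw [cl_of_mem le_rfl zero_le_one, max_eq_right (by linarith [cl_nonneg t])]

lemma kk_pow (x t : ℝ) (n : ℕ) : kk x t * cl t ^ n * (n+1) ≤ cl x ^ (n+1) := by
  unfold kk
  have ht := cl_nonneg t
  have hx := cl_nonneg x
  rcases le_total (cl x) (cl t) with h | h
  · rw [max_eq_right (by linarith)]; simp; positivity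
  · rw [max_eq_left (by linarith)]
    have key : ∀ n : ℕ, (cl x - cl t) * cl t ^ n * (n+1) + cl t ^ (n+1) ≤ cl x ^ (n+1) := by
      intro n
      induction n with
      | zero => simp
      | succ n ih =>
        have h1 : cl t ^ (n+1) ≤ cl x ^ (n+1) := pow_le_pow_left₀ ht h _
        have h2 : cl x ^ (n+1+1) = cl t * cl x ^ (n+1) + (cl x - cl t) * cl x ^ (n+1) := by ring
        rw [h2]
        have h3 := mul_le_mul_of_nonneg_left ih ht
        have h4 := mul_le_mul_of_nonneg_left h1 (sub_nonneg.2 h)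
        push_cast
        calc _ = cl t * ((cl x - cl t) * cl t ^ n * (n + 1) + cl t ^ (n + 1))
              + (cl x - cl t) * cl t ^ (n+1) := by ring
          _ ≤ _ := by linarith
    have := key n
    have : 0 ≤ cl t ^ (n+1) := by positivity
    linarith [key n]

abbrev EE := BoundedContinuousFunction ℝ ℝ

noncomputable def clE : EE :=
  BoundedContinuousFunction.ofNormedAddCommGroup cl cl_continuous 1
    (fun x => by rw [Real.norm_eq_abs, abs_of_nonneg (cl_nonneg x)]; exact cl_le_one x)

lemma clE_apply (x : ℝ) : clE x = cl x := rfl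

/-- kernel section times function -/
noncomputable def kE (x : ℝ) : EE :=
  BoundedContinuousFunction.ofNormedAddCommGroup (fun t => kk x t)
    (kk_continuous.comp (by fun_prop : Continuous fun t : ℝ => (x, t))) 1
    (fun t => by rw [Real.norm_eq_abs, abs_of_nonneg (kk_nonneg x t)]; exact kk_le x t)

lemma kE_apply (x t : ℝ) : kE x t = kk x t := rfl

section
variable (μ : Measure ℝ) [IsProbabilityMeasure μ]

lemma EE_int (f : EE) : Integrable (fun t => f t) μ := f.integrable μ

lemma EE_norm_int (f : EE) : |∫ t, f t ∂μ| ≤ ‖f‖ := by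
  have := norm_integral_le_of_norm_le_const (μ := μ) (f := fun t => f t) (C := ‖f‖)
    (Filter.Eventually.of_forall fun t => f.norm_coe_le_norm t)
  simpa using this

lemma EE_cont_int : Continuous fun f : EE => ∫ t, f t ∂μ := by
  have : LipschitzWith 1 fun f : EE => ∫ t, f t ∂μ := by
    apply LipschitzWith.of_dist_le_mul
    intro f g
    rw [Real.dist_eq, ← integral_sub (EE_int μ f) (EE_int μ g), dist_eq_norm]
    simpa using EE_norm_int μ (f - g)
  exact this.continuous

noncomputable def Kfun (y : EE) : EE :=
  BoundedContinuousFunction.ofNormedAddCommGroup (fun x => ∫ t, kk x t * y t ∂μ)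
    (by
      apply continuous_of_dominated (bound := fun _ => ‖y‖)
      · intro x
        exact ((kE x * y).continuous).aestronglyMeasurable
      · intro x
        refine Filter.Eventually.of_forall fun t => ?_
        rw [norm_mul, Real.norm_eq_abs, abs_of_nonneg (kk_nonneg x t)]
        have := y.norm_coe_le_norm t
        have := kk_le x t
        have := norm_nonneg (y t)
        nlinarith
      · exact integrable_const _
      · refine Filter.Eventually.of_forall fun t => ?_
        exact (kk_continuous.comp (by fun_prop : Continuous fun x : ℝ => (x, t))).mul
          continuous_const)
    ‖y‖ (by
      intro x
      have := EE_norm_int μ (kE x * y)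
      refine this.trans ((norm_mul_le _ _).trans ?_)
      have : ‖kE x‖ ≤ 1 := BoundedContinuousFunction.norm_ofNormedAddCommGroup_le _ zero_le_one _
      have := norm_nonneg y
      nlinarith)

lemma Kfun_apply (y : EE) (x : ℝ) : Kfun μ y x = ∫ t, kk x t * y t ∂μ := rfl

noncomputable def K : EE →L[ℝ] EE :=
  LinearMap.mkContinuous
    { toFun := Kfun μ
      map_add' := by
        intro u v; ext x
        simp only [Kfun_apply, BoundedContinuousFunction.add_apply]
        have h1 : Integrable (fun t => kk x t * u t) μ := EE_int μ (kE x * u)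
        have h2 : Integrable (fun t => kk x t * v t) μ := EE_int μ (kE x * v)
        rw [← integral_add h1 h2]
        congr 1; ext t
        ring
      map_smul' := by
        intro c u; ext x
        simp only [Kfun_apply, BoundedContinuousFunction.smul_apply, RingHom.id_apply, smul_eq_mul]
        rw [← integral_const_mul]
        congr 1; ext t; ring } 1
    (by
      intro y
      rw [one_mul]
      show ‖Kfun μ y‖ ≤ ‖y‖
      exact BoundedContinuousFunction.norm_ofNormedAddCommGroup_le _ (norm_nonneg _) _)

lemma K_apply (y : EE) (x : ℝ) : K μ y x = ∫ t, kk x t * y t ∂μ := rfl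

lemma K_pow_bound (n : ℕ) (y : EE) : ∀ x, |(K μ ^ n) y x| ≤ ‖y‖ * (cl x ^ n / n.factorial) := by
  induction n with
  | zero => intro x; simpa using y.norm_coe_le_norm x
  | succ n ih =>
    intro x
    rw [pow_succ', ContinuousLinearMap.mul_apply, K_apply]
    have := norm_integral_le_of_norm_le_const (μ := μ) (f := fun t => kk x t * (K μ ^ n) y t)
      (C := ‖y‖ * (cl x ^ (n+1) / (n+1).factorial))
      (Filter.Eventually.of_forall fun t => by
        rw [norm_mul, Real.norm_eq_abs, Real.norm_eq_abs, abs_of_nonneg (kk_nonneg x t)]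
        calc kk x t * |(K μ ^ n) y t| ≤ kk x t * (‖y‖ * (cl t ^ n / n.factorial)) :=
              mul_le_mul_of_nonneg_left (ih t) (kk_nonneg x t)
          _ = ‖y‖ * ((kk x t * cl t ^ n * (n+1)) / (n+1).factorial) := by
              rw [Nat.factorial_succ]; push_cast; field_simp
          _ ≤ _ := by
              have := kk_pow x t n
              gcongr)
    simpa using this

lemma K_pow_norm (n : ℕ) : ‖K μ ^ n‖ ≤ 1 / n.factorial := by
  apply ContinuousLinearMap.opNorm_le_bound _ (by positivity)
  intro y
  rw [BoundedContinuousFunction.norm_le (by positivity)]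
  intro x
  refine (K_pow_bound μ n y x).trans ?_
  rw [mul_comm]
  have : cl x ^ n ≤ 1 := pow_le_one₀ (cl_nonneg x) (cl_le_one x)
  gcongr

lemma unit_gen {R : Type*} [NormedRing R] [NormedAlgebra ℝ R] [CompleteSpace R] (T : R)
    (hT : ∀ n : ℕ, ‖T ^ n‖ ≤ 1 / n.factorial) (l : ℝ) : IsUnit (1 + l • T) := by
  have h := FloorSemiring.tendsto_pow_div_factorial_atTop |l|
  obtain ⟨n, hn⟩ := (h.eventually (gt_mem_nhds (show (0:ℝ) < 1 by norm_num))).exists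
  have h1 : ‖(-(l • T)) ^ n‖ < 1 := by
    refine lt_of_le_of_lt ?_ hn
    rw [← neg_smul, smul_pow, norm_smul, norm_pow, Real.norm_eq_abs, abs_neg]
    calc _ ≤ |l| ^ n * (1 / n.factorial) := by
          have := hT n
          gcongr
      _ = _ := by ring
  have h2 := isUnit_one_sub_of_norm_lt_one h1
  rw [← mul_neg_geom_sum] at h2
  have hc : Commute (1 - -(l • T)) (∑ i ∈ Finset.range n, (-(l • T)) ^ i) := by
    apply Commute.sum_right
    intro i _
    exact ((Commute.one_left _).sub_left (Commute.refl _)).pow_right i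
  have := (hc.isUnit_mul_iff.1 h2).1
  simpa using this

lemma inv_gen_cont {R : Type*} [NormedRing R] [NormedAlgebra ℝ R] [CompleteSpace R] (T : R)
    (hT : ∀ n : ℕ, ‖T ^ n‖ ≤ 1 / n.factorial) :
    Continuous fun l : ℝ => Ring.inverse (1 + l • T) := by
  rw [continuous_iff_continuousAt]
  intro l
  obtain ⟨u, hu⟩ := unit_gen T hT l
  have h1 := NormedRing.inverse_continuousAt u
  rw [hu] at h1
  exact ContinuousAt.comp (f := fun l : ℝ => 1 + l • T) (x := l) h1
    (by fun_prop)

lemma unitK (l : ℝ) : IsUnit (1 + l • K μ) :=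
  unit_gen (R := EE →L[ℝ] EE) (K μ) (K_pow_norm μ) l

noncomputable def Rv (l : ℝ) : EE →L[ℝ] EE := Ring.inverse (1 + l • K μ)

lemma Rv_cont : Continuous (Rv μ) :=
  inv_gen_cont (R := EE →L[ℝ] EE) (K μ) (K_pow_norm μ)

lemma Rv_spec (l : ℝ) (f : EE) : Rv μ l f + l • K μ (Rv μ l f) = f := by
  have := Ring.mul_inverse_cancel _ (unitK μ l)
  have := congrArg (fun T : EE →L[ℝ] EE => T f) this
  simpa [Rv] using this

lemma Rv_uniq (l : ℝ) (f w : EE) (h : w + l • K μ w = f) : w = Rv μ l f := by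
  have := Ring.inverse_mul_cancel _ (unitK μ l)
  have := congrArg (fun T : EE →L[ℝ] EE => T w) this
  rw [← h]
  simpa [Rv] using this.symm

noncomputable def ph (l : ℝ) : EE := Rv μ l 1
noncomputable def ps (l : ℝ) : EE := Rv μ l clE

lemma ph_cont : Continuous (ph μ) := by
  unfold ph; exact (Rv_cont μ).clm_apply continuous_const
lemma ps_cont : Continuous (ps μ) := by
  unfold ps; exact (Rv_cont μ).clm_apply continuous_const

lemma ph_eq (l x : ℝ) : ph μ l x = 1 - l * K μ (ph μ l) x := by
  have := congrArg (fun f : EE => f x) (Rv_spec μ l 1)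
  simp at this
  unfold ph; linarith

lemma ps_eq (l x : ℝ) : ps μ l x = cl x - l * K μ (ps μ l) x := by
  have := congrArg (fun f : EE => f x) (Rv_spec μ l clE)
  simp [clE_apply] at this
  unfold ps; linarith

lemma EE_prod_int (F : ℝ × ℝ → ℝ) (hF : Continuous F) (Cc : ℝ) (hb : ∀ z, |F z| ≤ Cc) :
    Integrable F (μ.prod μ) :=
  Integrable.of_bound hF.aestronglyMeasurable Cc (Filter.Eventually.of_forall hb)

lemma green (u v : EE) : ∫ x, K μ u x * v x ∂μ = ∫ x, u x * K μ v x ∂μ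
    - (∫ t, cl t * u t ∂μ) * (∫ t, v t ∂μ) + (∫ t, u t ∂μ) * (∫ t, cl t * v t ∂μ) := by
  have e1 : ∫ x, K μ u x * v x ∂μ = ∫ x, ∫ t, kk x t * u t * v x ∂μ ∂μ := by
    congr 1; ext x; rw [K_apply, ← integral_mul_const]
  have hint : Integrable (Function.uncurry fun x t => kk x t * u t * v x) (μ.prod μ) := by
    apply EE_prod_int μ _ _ (‖u‖ * ‖v‖)
    · intro z
      simp only [Function.uncurry]
      rw [abs_mul, abs_mul, abs_of_nonneg (kk_nonneg _ _)]
      have h1 := u.norm_coe_le_norm z.2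
      have h2 := v.norm_coe_le_norm z.1
      have h3 := kk_le z.1 z.2
      have h4 := kk_nonneg z.1 z.2
      rw [Real.norm_eq_abs] at h1 h2
      have : kk z.1 z.2 * |u z.2| ≤ ‖u‖ := by
        have := abs_nonneg (u z.2); nlinarith
      gcongr
    · have := kk_continuous
      have := u.continuous
      have := v.continuous
      simp only [Function.uncurry_def]
      fun_prop
  rw [e1, integral_integral_swap hint]
  have e2 : ∀ t, ∫ x, kk x t * u t * v x ∂μ = u t * K μ v t + u t * (∫ x, cl x * v x ∂μ)
      - (cl t * u t) * ∫ x, v x ∂μ := by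
    intro t
    rw [K_apply, ← integral_const_mul, ← integral_const_mul, ← integral_const_mul,
      ← integral_add, ← integral_sub]
    · congr 1; ext x; rw [kk_sub x t]; ring
    · exact ((EE_int μ (kE t * v)).const_mul (u t)).add ((EE_int μ (clE * v)).const_mul (u t))
    · exact (EE_int μ v).const_mul _
    · exact (EE_int μ (kE t * v)).const_mul (u t)
    · exact (EE_int μ (clE * v)).const_mul (u t)
  simp_rw [e2]
  rw [integral_sub, integral_add, integral_mul_const, integral_mul_const]
  · ring
  · exact EE_int μ (u * K μ v)
  · exact (EE_int μ u).mul_const _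
  · exact (EE_int μ (u * K μ v)).add ((EE_int μ u).mul_const _)
  · exact (EE_int μ (clE * u)).mul_const _

noncomputable def fA (l : ℝ) : ℝ := ph μ l 1
noncomputable def fB (l : ℝ) : ℝ := ps μ l 1
noncomputable def fC (l : ℝ) : ℝ := - l * ∫ t, ph μ l t ∂μ
noncomputable def fE (l : ℝ) : ℝ := 1 - l * ∫ t, ps μ l t ∂μ

lemma K_one (u : EE) : K μ u 1 = ∫ t, u t ∂μ - ∫ t, cl t * u t ∂μ := by
  have h2 : Integrable (fun t => cl t * u t) μ := EE_int μ (clE * u)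
  rw [K_apply, ← integral_sub (EE_int μ u) h2]
  congr 1; ext t; rw [kk_one]; ring

lemma fA_eq (l : ℝ) : fA μ l = 1 - l * (∫ t, ph μ l t ∂μ - ∫ t, cl t * ph μ l t ∂μ) := by
  rw [fA, ph_eq, K_one]
lemma fB_eq (l : ℝ) : fB μ l = 1 - l * (∫ t, ps μ l t ∂μ - ∫ t, cl t * ps μ l t ∂μ) := by
  rw [fB, ps_eq, K_one, cl_of_mem zero_le_one le_rfl]

lemma fA_cont : Continuous (fA μ) :=
  (BoundedContinuousFunction.evalCLM ℝ (1:ℝ)).continuous.comp (ph_cont μ)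
lemma fB_cont : Continuous (fB μ) :=
  (BoundedContinuousFunction.evalCLM ℝ (1:ℝ)).continuous.comp (ps_cont μ)
lemma fC_cont : Continuous (fC μ) := by
  have := (EE_cont_int μ).comp (ph_cont μ)
  exact continuous_neg.mul this
lemma fE_cont : Continuous (fE μ) := by
  have := (EE_cont_int μ).comp (ps_cont μ)
  exact continuous_const.sub (continuous_id.mul this)

/-- l * ∫ (K u) v when u = f - l K u -/
lemma mulK (l : ℝ) (u f v : EE) (h : ∀ x, u x = f x - l * K μ u x) :
    l * ∫ x, K μ u x * v x ∂μ = ∫ x, f x * v x ∂μ - ∫ x, u x * v x ∂μ := by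
  have h1 : Integrable (fun t => f t * v t) μ := EE_int μ (f * v)
  have h2 : Integrable (fun t => u t * v t) μ := EE_int μ (u * v)
  rw [← integral_const_mul, ← integral_sub h1 h2]
  congr 1; ext x; rw [h x]; ring

lemma det1 (l : ℝ) : fA μ l * fE μ l - fB μ l * fC μ l = 1 := by
  have g := green μ (ph μ l) (ps μ l)
  have e1 := mulK μ l (ph μ l) 1 (ps μ l) (fun x => by simpa using ph_eq μ l x)
  have e2 := mulK μ l (ps μ l) clE (ph μ l) (fun x => ps_eq μ l x)
  simp only [BoundedContinuousFunction.coe_one, Pi.one_apply, one_mul, clE_apply] at e1 e2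
  have e3 : ∫ x, ph μ l x * K μ (ps μ l) x ∂μ = ∫ x, K μ (ps μ l) x * ph μ l x ∂μ := by
    congr 1; ext x; ring
  have e4 : ∫ x, ps μ l x * ph μ l x ∂μ = ∫ x, ph μ l x * ps μ l x ∂μ := by
    congr 1; ext x; ring
  rw [e3] at g
  rw [e4] at e2
  rw [fA_eq, fB_eq, fC, fE]
  linear_combination l * e1 - l * e2 - l * l * g

lemma near1 (p : ℝ) (hp : fC μ p = 0) : ∃ h : ℝ → ℝ, ContinuousAt h p ∧ 0 < h p ∧
    ∀ l, fC μ l * fA μ p = (p - l) * h l := by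
  refine ⟨fun l => ∫ t, ph μ l t * ph μ p t ∂μ, ?_, ?_, ?_⟩
  · have : Continuous fun l => ph μ l * ph μ p := (ph_cont μ).mul continuous_const
    exact ((EE_cont_int μ).comp this).continuousAt
  · have hnn : 0 ≤ ∫ t, ph μ p t * ph μ p t ∂μ := integral_nonneg fun t => mul_self_nonneg _
    refine lt_of_le_of_ne hnn fun h0 => ?_
    have := (integral_eq_zero_iff_of_nonneg (fun t => mul_self_nonneg (ph μ p t))
      (EE_int μ (ph μ p * ph μ p))).1 h0.symm
    have hK : ∀ x, K μ (ph μ p) x = 0 := by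
      intro x
      rw [K_apply]
      apply integral_eq_zero_of_ae
      filter_upwards [this] with t ht
      have : ph μ p t = 0 := by simpa using ht
      simp [this]
    have h1 : ∀ x, ph μ p x = 1 := fun x => by rw [ph_eq, hK]; ring
    simp [h1] at h0
  · intro l
    have g := green μ (ph μ l) (ph μ p)
    have e1 := mulK μ l (ph μ l) 1 (ph μ p) (fun x => by simpa using ph_eq μ l x)
    have e2 := mulK μ p (ph μ p) 1 (ph μ l) (fun x => by simpa using ph_eq μ p x)
    simp only [BoundedContinuousFunction.coe_one, Pi.one_apply, one_mul] at e1 e2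
    have e3 : ∫ x, ph μ l x * K μ (ph μ p) x ∂μ = ∫ x, K μ (ph μ p) x * ph μ l x ∂μ := by
      congr 1; ext x; ring
    have e4 : ∫ x, ph μ p x * ph μ l x ∂μ = ∫ x, ph μ l x * ph μ p x ∂μ := by
      congr 1; ext x; ring
    rw [e3] at g
    rw [e4] at e2
    rw [fC] at hp
    rw [fA_eq, fC]
    simp only
    linear_combination (-p) * e1 + l * e2 + l * p * g + (1 + l * (∫ t, cl t * ph μ l t ∂μ) - l * (∫ t, ph μ l t ∂μ)) * hp

end

section
variable (μ : Measure ℝ) [IsProbabilityMeasure μ]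

noncomputable def cellE (s a : ℝ) (y : EE) : EE :=
  y.compContinuous ⟨fun x => s + a * cl x, by have := cl_continuous; fun_prop⟩

lemma cellE_apply (s a : ℝ) (y : EE) (x : ℝ) : cellE s a y x = y (s + a * cl x) := rfl

/-- self-similarity of the measure -/
def SelfSim (κ : ℕ) (a b : ℝ) : Prop :=
  ∀ f : EE, ∫ t, f t ∂μ =
    (1 / κ : ℝ) * ∑ k ∈ Finset.range κ, ∫ t, f ((k:ℝ) * (a + b) + a * cl t) ∂μ

lemma cell_mem {κ : ℕ} {a b : ℝ} (ha : 0 < a) (hb : 0 < b) (hab : κ * a + (κ - 1) * b = 1)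
    {k : ℕ} (hk : k < κ) (x : ℝ) :
    0 ≤ (k:ℝ) * (a + b) + a * cl x ∧ (k:ℝ) * (a + b) + a * cl x ≤ 1 := by
  have h1 := cl_nonneg x
  have h2 := cl_le_one x
  have h3 : (k:ℝ) + 1 ≤ κ := by exact_mod_cast hk
  constructor
  · positivity
  · have : (k:ℝ) * (a + b) ≤ (κ - 1) * (a + b) :=
      mul_le_mul_of_nonneg_right (by linarith) (by linarith)
    nlinarith

lemma K_cell {κ : ℕ} {a b : ℝ} (ha : 0 < a) (hb : 0 < b) (hab : κ * a + (κ - 1) * b = 1)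
    (hss : SelfSim μ κ a b) (y : EE) {k : ℕ} (hk : k < κ) (x : ℝ) :
    K μ y ((k:ℝ) * (a + b) + a * cl x) = (1 / κ : ℝ) *
      (((k:ℝ) * (a + b) + a * cl x) *
          ∑ i ∈ Finset.range k, ∫ t, cellE ((i:ℝ) * (a + b)) a y t ∂μ
        - ∑ i ∈ Finset.range k, ((i:ℝ) * (a + b) * (∫ t, cellE ((i:ℝ) * (a + b)) a y t ∂μ)
            + a * ∫ t, cl t * cellE ((i:ℝ) * (a + b)) a y t ∂μ)
        + a * K μ (cellE ((k:ℝ) * (a + b)) a y) x) := by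
  set z := (k:ℝ) * (a + b) + a * cl x with hz
  obtain ⟨hz0, hz1⟩ := cell_mem ha hb hab hk x
  rw [K_apply]
  have h := hss (kE z * y)
  change ∫ t, kk z t * y t ∂μ = _ at h
  rw [h]
  congr 1
  have hsub : Finset.range (k+1) ⊆ Finset.range κ := Finset.range_subset_range.2 hk
  have hcx := cl_nonneg x
  have hcx1 := cl_le_one x
  rw [← Finset.sum_subset hsub, Finset.sum_range_succ]
  · congr 1
    · rw [Finset.mul_sum, ← Finset.sum_sub_distrib]
      apply Finset.sum_congr rfl
      intro i hi
      have hik : i < k := Finset.mem_range.1 hi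
      have hik' : (i:ℝ) + 1 ≤ k := by exact_mod_cast hik
      have i1 : Integrable (fun t => cellE ((i:ℝ) * (a + b)) a y t) μ := EE_int μ _
      have i2 : Integrable (fun t => cl t * cellE ((i:ℝ) * (a + b)) a y t) μ :=
        EE_int μ (clE * cellE ((i:ℝ) * (a + b)) a y)
      have i3 : Integrable (fun t => (i:ℝ) * (a + b) * cellE ((i:ℝ) * (a + b)) a y t
          + a * (cl t * cellE ((i:ℝ) * (a + b)) a y t)) μ := (i1.const_mul _).add (i2.const_mul _)
      rw [← integral_const_mul, ← integral_const_mul, ← integral_const_mul,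
        ← integral_add (i1.const_mul _) (i2.const_mul _), ← integral_sub (i1.const_mul _) i3]
      congr 1; ext t
      change kk z ((i:ℝ) * (a + b) + a * cl t) * y ((i:ℝ) * (a + b) + a * cl t) = _
      obtain ⟨q0, q1⟩ := cell_mem ha hb hab (hik.trans hk) t
      have : ((i:ℝ) + 1) * (a + b) ≤ k * (a + b) := by gcongr
      have h2 := cl_le_one t
      have h3 : a * cl t ≤ a := by nlinarith
      have h4 : 0 ≤ a * cl x := by positivity
      rw [kk, cl_of_mem hz0 hz1, cl_of_mem q0 q1, max_eq_left (by linarith), cellE_apply]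
      ring
    · rw [K_apply, ← integral_const_mul]
      congr 1; ext t
      change kk z ((k:ℝ) * (a + b) + a * cl t) * y ((k:ℝ) * (a + b) + a * cl t) = _
      obtain ⟨q0, q1⟩ := cell_mem ha hb hab hk t
      rw [kk, kk, cl_of_mem hz0 hz1, cl_of_mem q0 q1, cellE_apply]
      have : (k:ℝ) * (a + b) + a * cl x - ((k:ℝ) * (a + b) + a * cl t) = a * (cl x - cl t) := by
        ring
      rw [this, show max (a * (cl x - cl t)) 0 = a * max (cl x - cl t) 0 by
        rw [mul_max_of_nonneg _ _ ha.le, mul_zero]]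
      ring
  · intro i hi hi'
    have hik : k < i := by
      simp only [Finset.mem_range] at hi'; omega
    have hik' : (k:ℝ) + 1 ≤ i := by exact_mod_cast hik
    rw [← integral_zero ℝ ℝ (μ := μ)]
    congr 1; ext t
    change kk z ((i:ℝ) * (a + b) + a * cl t) * y ((i:ℝ) * (a + b) + a * cl t) = _
    obtain ⟨q0, q1⟩ := cell_mem ha hb hab (Finset.mem_range.1 hi) t
    have : ((k:ℝ) + 1) * (a + b) ≤ i * (a + b) := by gcongr
    have h2 := cl_nonneg t
    have h3 : a * cl x ≤ a := by nlinarith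
    have h4 : 0 ≤ a * cl t := by positivity
    rw [kk, cl_of_mem hz0 hz1, cl_of_mem q0 q1, max_eq_right (by linarith), zero_mul]

lemma K_at_zero (u : EE) : K μ u 0 = 0 := by
  rw [K_apply]; simp [kk_zero]

/-- transfer through all cells -/
lemma transfer {κ : ℕ} {a b : ℝ} (hκ : 2 ≤ κ) (ha : 0 < a) (hb : 0 < b)
    (hab : κ * a + (κ - 1) * b = 1)
    (hss : SelfSim μ κ a b) (y : EE) (y0 g0 l : ℝ)
    (hy : ∀ z, y z = y0 + g0 * cl z - (κ / a * l) * K μ y z) :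
    let x := (fA μ l + fE μ l) / 2 + b / (2 * a) * fC μ l
    y 1 = chS κ x * (fA μ l * y0 + a * fB μ l * g0) - chS (κ - 1) x * (y0 - b * g0) ∧
    g0 - (κ / a * l) * ∫ t, y t ∂μ =
      chS κ x * (fC μ l / a * y0 + fE μ l * g0) - chS (κ - 1) x * g0 := by
  intro x
  have hκ0 : (κ:ℝ) ≠ 0 := by positivity
  have ha0 : a ≠ 0 := ha.ne'
  set w : ℕ → EE := fun k => cellE ((k:ℝ) * (a + b)) a y with hw
  set SJ : ℕ → ℝ := fun k => ∑ i ∈ Finset.range k, ∫ t, w i t ∂μ with hSJ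
  set SM : ℕ → ℝ := fun k => ∑ i ∈ Finset.range k, ((i:ℝ) * (a + b) * (∫ t, w i t ∂μ)
            + a * ∫ t, cl t * w i t ∂μ) with hSM
  have L1 : ∀ k, k < κ → ∀ x, w k x = y0 + g0 * ((k:ℝ) * (a + b) + a * cl x)
      - (l / a) * (((k:ℝ) * (a + b) + a * cl x) * SJ k - SM k) - l * K μ (w k) x := by
    intro k hk x
    obtain ⟨q0, q1⟩ := cell_mem ha hb hab hk x
    have h := hy ((k:ℝ) * (a + b) + a * cl x)
    rw [K_cell μ ha hb hab hss y hk x, cl_of_mem q0 q1] at h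
    change y ((k:ℝ) * (a + b) + a * cl x) = _
    rw [h]
    simp only [hSJ, hSM, hw]
    field_simp
    ring
  have cl0 : cl 0 = 0 := cl_of_mem le_rfl zero_le_one
  have cl1 : cl 1 = 1 := cl_of_mem zero_le_one le_rfl
  set g : ℕ → ℝ := fun k => g0 - l / a * SJ k with hg
  have L2 : ∀ k, k < κ → w k = w k 0 • ph μ l + (a * g k) • ps μ l := by
    intro k hk
    have : w k + l • K μ (w k) = (w k 0) • (1 : EE) + (a * g k) • clE := by
      ext x
      have h1 := L1 k hk x
      have h2 := L1 k hk 0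
      rw [cl0, K_at_zero] at h2
      simp only [BoundedContinuousFunction.add_apply, BoundedContinuousFunction.smul_apply,
        smul_eq_mul, clE_apply, BoundedContinuousFunction.coe_one, Pi.one_apply, mul_one]
      rw [h1, h2]
      simp only [hg]
      field_simp
      ring
    have := Rv_uniq μ l _ _ this
    rw [map_add, map_smul, map_smul] at this
    exact this
  have L3 : ∀ k, k < κ → w k 1 = fA μ l * w k 0 + a * fB μ l * g k := by
    intro k hk
    have := congrArg (fun f : EE => f 1) (L2 k hk)
    simp only [BoundedContinuousFunction.add_apply, BoundedContinuousFunction.smul_apply,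
      smul_eq_mul] at this
    rw [this, fA, fB]
    ring
  have L4 : ∀ k, k < κ → g (k+1) = fC μ l / a * w k 0 + fE μ l * g k := by
    intro k hk
    have hJ : ∫ t, w k t ∂μ = w k 0 * (∫ t, ph μ l t ∂μ) + (a * g k) * ∫ t, ps μ l t ∂μ := by
      rw [← integral_const_mul, ← integral_const_mul,
        ← integral_add ((EE_int μ _).const_mul _) ((EE_int μ _).const_mul _)]
      congr 1; ext t
      have := congrArg (fun f : EE => f t) (L2 k hk)
      simpa only [BoundedContinuousFunction.add_apply, BoundedContinuousFunction.smul_apply,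
        smul_eq_mul] using this
    have : g (k+1) = g k - l / a * ∫ t, w k t ∂μ := by
      simp only [hg, hSJ, Finset.sum_range_succ]; ring
    rw [this, hJ, fC, fE]
    field_simp
    ring
  have L5 : ∀ k, k + 1 < κ → w (k+1) 0 = w k 1 + b * g (k+1) := by
    intro k hk
    rw [L1 (k+1) hk 0, L1 k (by omega) 1, K_at_zero, K_one, cl0, cl1]
    simp only [hg, hSJ, hSM, Finset.sum_range_succ]
    push_cast
    field_simp
    ring
  have hw0 : w 0 0 = y0 := by
    rw [L1 0 (by omega) 0, K_at_zero, cl0]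
    simp [hSJ, hSM]
  have hg00 : g 0 = g0 := by simp [hg, hSJ]
  have hdet := det1 μ l
  have ind : ∀ k, k < κ → w k 1 = chS (k+1) x * (fA μ l * y0 + a * fB μ l * g0)
        - chS k x * (y0 - b * g0) ∧
      g (k+1) = chS (k+1) x * (fC μ l / a * y0 + fE μ l * g0) - chS k x * g0 := by
    intro k
    induction k with
    | zero =>
      intro hk
      rw [L3 0 hk, L4 0 hk, hw0, hg00]
      simp [chS_zero, chS_one]
    | succ k ih =>
      intro hk
      obtain ⟨i1, i2⟩ := ih (by omega)
      rw [L3 (k+1) hk, L4 (k+1) hk, L5 k hk, chS_two]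
      rw [i1, i2]
      obtain ⟨c', hc'⟩ : ∃ c', c' = fC μ l / a := ⟨_, rfl⟩
      have hC : fC μ l = a * c' := by rw [hc']; field_simp
      have hx : 2 * x = fA μ l + fE μ l + b * c' := by
        simp only [x]; rw [hC]; field_simp
      rw [← hc', hx]
      rw [hC] at hdet
      constructor
      · linear_combination chS (k+1) x * (b * g0 - y0) * hdet
      · linear_combination (-chS (k+1) x * g0) * hdet
  have hk1 : κ - 1 + 1 = κ := by omega
  obtain ⟨e1, e2⟩ := ind (κ - 1) (by omega)
  rw [hk1] at e1 e2
  refine ⟨?_, ?_⟩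
  · rw [← e1]
    change _ = y ((((κ - 1 : ℕ) : ℝ)) * (a + b) + a * cl 1)
    congr 1
    rw [cl1, Nat.cast_sub (by omega)]
    push_cast
    linarith
  · rw [← e2, hss y]
    change _ = g0 - l / a * ∑ k ∈ Finset.range κ, ∫ t, y ((k:ℝ) * (a + b) + a * cl t) ∂μ
    obtain ⟨S, hS⟩ : ∃ S, S = ∑ k ∈ Finset.range κ, ∫ t, y ((k:ℝ) * (a + b) + a * cl t) ∂μ :=
      ⟨_, rfl⟩
    rw [← hS]
    field_simp

section
variable {κ : ℕ} {a b : ℝ} (hκ : 2 ≤ κ) (ha : 0 < a) (hb : 0 < b)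
    (hab : κ * a + (κ - 1) * b = 1) (hss : SelfSim μ κ a b)

noncomputable def xx (a b l : ℝ) : ℝ := (fA μ l + fE μ l) / 2 + b / (2 * a) * fC μ l

lemma xx_cont (a b : ℝ) : Continuous (xx μ a b) := by
  have := fA_cont μ
  have := fE_cont μ
  have := fC_cont μ
  unfold xx; fun_prop

include hκ ha hb hab hss

lemma rec1 (l : ℝ) : fA μ (κ / a * l) = chS κ (xx μ a b l) * fA μ l - chS (κ - 1) (xx μ a b l) ∧
    fC μ (κ / a * l) = chS κ (xx μ a b l) * (fC μ l / a) := by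
  have := transfer μ hκ ha hb hab hss (ph μ (κ / a * l)) 1 0 l (fun z => by
    rw [ph_eq]; ring)
  simp only [mul_one, mul_zero, add_zero, sub_zero, zero_sub] at this
  refine ⟨this.1, ?_⟩
  rw [fC]
  refine Eq.trans ?_ this.2
  ring

lemma rec2 (l : ℝ) : fB μ (κ / a * l) = chS κ (xx μ a b l) * (a * fB μ l)
      + b * chS (κ - 1) (xx μ a b l) ∧
    fE μ (κ / a * l) = chS κ (xx μ a b l) * fE μ l - chS (κ - 1) (xx μ a b l) := by
  have := transfer μ hκ ha hb hab hss (ps μ (κ / a * l)) 0 1 l (fun z => by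
    rw [ps_eq]; ring)
  simp only [mul_one, mul_zero, zero_add, zero_sub] at this
  refine ⟨?_, this.2⟩
  rw [fB]
  refine Eq.trans this.1 ?_
  simp only [xx]
  ring

lemma sym1 (ha2 : 2 * a < 1) (l : ℝ) : fE μ l = fA μ l := by
  have hκ0 : (0:ℝ) < κ := by positivity
  have hdrec : ∀ l, fA μ (κ / a * l) - fE μ (κ / a * l) =
      chS κ (xx μ a b l) * (fA μ l - fE μ l) := by
    intro l
    rw [(rec1 μ hκ ha hb hab hss l).1, (rec2 μ hκ ha hb hab hss l).2]; ring
  have hx0 : xx μ a b 0 = 1 := by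
    simp [xx, fA_eq, fE, fC]
  have hc : Continuous fun l => |chS κ (xx μ a b l)| :=
    ((chS_continuous κ).comp (xx_cont μ a b)).abs
  have hev : ∀ᶠ l in nhds (0:ℝ), |chS κ (xx μ a b l)| < 2 * κ := by
    apply hc.continuousAt.eventually_lt continuousAt_const
    rw [hx0, chS_at_one, abs_of_pos hκ0]; linarith
  obtain ⟨h, hh⟩ : ∃ h : ℝ → ℝ, h = fun l => - (∫ t, ph μ l t ∂μ - ∫ t, cl t * ph μ l t ∂μ)
      + ∫ t, ps μ l t ∂μ := ⟨_, rfl⟩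
  have hd : ∀ l, fA μ l - fE μ l = l * h l := by
    intro l; rw [fA_eq, fE, hh]; ring
  have hhc : Continuous h := by
    rw [hh]
    have c1 := (EE_cont_int μ).comp (ph_cont μ)
    have c2 := (EE_cont_int μ).comp (ps_cont μ)
    have c3 : Continuous fun l => ∫ t, cl t * ph μ l t ∂μ :=
      (EE_cont_int μ).comp ((continuous_const (y := clE)).mul (ph_cont μ))
    exact (c1.sub c3).neg.add c2
  have hev2 : ∀ᶠ l in nhds (0:ℝ), |h l| < |h 0| + 1 :=
    hhc.abs.continuousAt.eventually_lt continuousAt_const (by linarith)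
  obtain ⟨r, hr, hball⟩ := Metric.eventually_nhds_iff.1 (hev.and hev2)
  have hq : κ / a > 1 := by
    rw [gt_iff_lt, one_lt_div ha]
    have : (2:ℝ) ≤ κ := by exact_mod_cast hκ
    linarith
  have hsmall : ∀ n : ℕ, ∀ l, |l| < r →
      |fA μ l - fE μ l| ≤ (2 * a) ^ n * ((|h 0| + 1) * |l|) := by
    intro n
    induction n with
    | zero =>
      intro l hl
      rw [hd, abs_mul]
      have := (hball (y := l) (by simpa using hl)).2
      simp only [pow_zero, one_mul]
      rw [mul_comm]
      gcongr
    | succ n ih =>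
      intro l hl
      have hl' : |a / κ * l| ≤ |l| := by
        rw [abs_mul, abs_of_pos (by positivity)]
        have : a / κ ≤ 1 := by
          rw [div_le_one hκ0]
          rw [gt_iff_lt, one_lt_div ha] at hq
          exact hq.le
        have := abs_nonneg l
        nlinarith
      have e := hdrec (a / κ * l)
      have e2 : (κ:ℝ) / a * (a / κ * l) = l := by field_simp
      rw [e2] at e
      rw [e, abs_mul]
      have b1 := (hball (y := a / κ * l) (by
        rw [Real.dist_eq, sub_zero]; exact hl'.trans_lt hl)).1
      have b2 := ih (a / κ * l) (hl'.trans_lt hl)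
      calc _ ≤ (2 * κ) * ((2 * a) ^ n * ((|h 0| + 1) * |a / κ * l|)) := by gcongr
        _ = _ := by
          rw [abs_mul, abs_of_pos (show 0 < a / κ by positivity)]
          field_simp
          ring
  have hloc : ∀ l, |l| < r → fA μ l - fE μ l = 0 := by
    intro l hl
    have t : Filter.Tendsto (fun n : ℕ => (2 * a) ^ n * ((|h 0| + 1) * |l|)) Filter.atTop
        (nhds (0 * ((|h 0| + 1) * |l|))) :=
      (tendsto_pow_atTop_nhds_zero_of_lt_one (by positivity) ha2).mul_const _
    rw [zero_mul] at t
    have := ge_of_tendsto' t (fun n => hsmall n l hl)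
    exact abs_nonpos_iff.1 this
  have hall : ∀ n : ℕ, ∀ l, |l| < r * (κ / a) ^ n → fA μ l - fE μ l = 0 := by
    intro n
    induction n with
    | zero => intro l hl; exact hloc l (by simpa using hl)
    | succ n ih =>
      intro l hl
      have e := hdrec (a / κ * l)
      have e2 : (κ:ℝ) / a * (a / κ * l) = l := by field_simp
      rw [e2] at e
      rw [e, ih, mul_zero]
      rw [abs_mul, abs_of_pos (show 0 < a / κ by positivity)]
      calc a / κ * |l| < a / κ * (r * (κ / a) ^ (n+1)) := by gcongr
        _ = _ := by rw [pow_succ]; field_simp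
  obtain ⟨n, hn⟩ := pow_unbounded_of_one_lt (|l| / r) hq
  have := hall n l (by rw [div_lt_iff₀ hr] at hn; linarith)
  linarith

/-- the transfer data of the string -/
noncomputable def mkT (ha2 : 2 * a < 1) : TMat κ a b :=
  have hx : ∀ l, xx μ a b l = fA μ l + b / (2 * a) * fC μ l := fun l => by
    rw [xx, sym1 μ hκ ha hb hab hss ha2 l]; ring
  { A := fA μ
    B := fB μ
    C := fC μ
    cA := fA_cont μ
    cB := fB_cont μ
    cC := fC_cont μ
    det := fun l => by
      have := det1 μ l
      rw [sym1 μ hκ ha hb hab hss ha2 l] at this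
      rw [← this]; ring
    recA := fun l => by rw [← hx]; exact (rec1 μ hκ ha hb hab hss l).1
    recB := fun l => by rw [← hx]; exact (rec2 μ hκ ha hb hab hss l).1
    recC := fun l => by rw [← hx]; exact (rec1 μ hκ ha hb hab hss l).2
    A0 := by simp [fA_eq]
    B0 := by simp [fB_eq]
    C0 := by simp [fC]
    near := fun p hp => near1 μ p hp }

end
end

section
variable {κ : ℕ} {a b : ℝ}

lemma cl_of_le {x : ℝ} (h : x ≤ 0) : cl x = 0 := by
  unfold cl; exact max_eq_left ((min_le_left _ _).trans h)
lemma cl_of_ge {x : ℝ} (h : 1 ≤ x) : cl x = 1 := by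
  unfold cl; rw [min_eq_right h]; norm_num

lemma node_le (ha : 0 < a) (hb : 0 < b) (hab : κ * a + (κ - 1) * b = 1)
    {k : ℕ} (hk : k < κ) : (k:ℝ) * (a + b) + a ≤ 1 := by
  have h3 : (k:ℝ) + 1 ≤ κ := by exact_mod_cast hk
  have : (k:ℝ) * (a + b) ≤ (κ - 1) * (a + b) :=
    mul_le_mul_of_nonneg_right (by linarith) (by linarith)
  nlinarith

variable {P : ℝ → ℝ} (hκ : 2 ≤ κ) (ha : 0 < a) (hb : 0 < b)
    (hab : κ * a + (κ - 1) * b = 1) (hP : CantorType κ a b P)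
include hκ ha hb hab hP

lemma P_cell {k : ℕ} (hk : k < κ) {x : ℝ} (hx : x ∈ Set.Icc (0:ℝ) 1) :
    P ((k:ℝ) * (a + b) + a * x) = P ((k:ℝ) * (a + b)) + P x / κ := by
  obtain ⟨_, h0, h1, _, hs⟩ := hP
  have hκ0 : (κ:ℝ) ≠ 0 := by positivity
  obtain ⟨c, hc⟩ := hs k (by omega)
  have e0 := hc 0 ⟨le_rfl, zero_le_one⟩
  have e1 := hc x hx
  rw [h0, mul_zero, add_zero, zero_add] at e0
  field_simp
  linarith

lemma P_gap {k : ℕ} (hk : k + 1 < κ) {x : ℝ} (h1 : (k:ℝ) * (a + b) + a ≤ x)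
    (h2 : x ≤ ((k:ℝ) + 1) * (a + b)) : P x = P ((k:ℝ) * (a + b) + a) := by
  obtain ⟨hc, h0, _, hg, hs⟩ := hP
  obtain ⟨c, hc'⟩ := hg (k+1) (by omega) (by omega)
  have hlt : (k:ℝ) * (a + b) + a < ((k:ℝ) + 1) * (a + b) := by linarith
  have hn := node_le ha hb hab hk
  push_cast at hc' hn
  have hsub : Set.Icc ((k:ℝ) * (a + b) + a) (((k:ℝ) + 1) * (a + b)) ⊆ Set.Icc 0 1 := by
    apply Set.Icc_subset_Icc
    · positivity
    · linarith
  have key : Set.EqOn P (fun _ => c) (Set.Icc ((k:ℝ) * (a + b) + a) (((k:ℝ) + 1) * (a + b))) := by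
    apply Set.EqOn.of_subset_closure (s := Set.Ioo ((k:ℝ) * (a + b) + a) (((k:ℝ) + 1) * (a + b)))
    · intro z hz
      apply hc'
      convert hz using 2
      ring
    · exact hc.mono hsub
    · exact continuousOn_const
    · exact Set.Ioo_subset_Icc_self
    · rw [closure_Ioo hlt.ne]
  rw [key ⟨h1, h2⟩, key ⟨le_rfl, hlt.le⟩]

lemma P_node {k : ℕ} (hk : k < κ) : P ((k:ℝ) * (a + b)) = k / κ := by
  induction k with
  | zero => simp [hP.2.1]
  | succ k ih =>
    have h1 := P_gap hκ ha hb hab hP hk (x := ((k:ℝ) + 1) * (a + b)) (by linarith) le_rfl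
    have h2 := P_cell hκ ha hb hab hP (k := k) (by omega) (x := 1) ⟨zero_le_one, le_rfl⟩
    rw [mul_one, hP.2.2.1, ih (by omega)] at h2
    push_cast
    rw [h1, h2]; ring

lemma P_sum (x : ℝ) : P (cl x) = (1 / κ : ℝ) *
    ∑ k ∈ Finset.range κ, P (cl ((x - (k:ℝ) * (a + b)) / a)) := by
  have h0 := hP.2.1
  have h1 := hP.2.2.1
  have hκ0 : (κ:ℝ) ≠ 0 := by positivity
  rcases lt_or_ge x 0 with hx | hx
  · rw [cl_of_le hx.le, h0, Finset.sum_eq_zero, mul_zero]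
    intro i _
    rw [cl_of_le, h0]
    apply div_nonpos_of_nonpos_of_nonneg _ ha.le
    have : 0 ≤ (i:ℝ) * (a + b) := by positivity
    linarith
  rcases lt_or_ge 1 x with hx1 | hx1
  · rw [cl_of_ge hx1.le, h1, Finset.sum_congr rfl (g := fun _ => (1:ℝ))]
    · simp; field_simp
    · intro i hi
      rw [cl_of_ge, h1]
      rw [le_div_iff₀ ha]
      have := node_le ha hb hab (Finset.mem_range.1 hi)
      linarith
  rw [cl_of_mem hx hx1]
  obtain ⟨k, hk, hkx, hkx'⟩ : ∃ k : ℕ, k < κ ∧ (k:ℝ) * (a + b) ≤ x ∧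
      ∀ i : ℕ, k < i → i < κ → x < (i:ℝ) * (a + b) := by
    classical
    refine ⟨Nat.findGreatest (fun k : ℕ => (k:ℝ) * (a + b) ≤ x) (κ - 1), ?_, ?_, ?_⟩
    · have := Nat.findGreatest_le (P := fun k : ℕ => (k:ℝ) * (a + b) ≤ x) (κ - 1)
      omega
    · exact Nat.findGreatest_spec (P := fun k : ℕ => (k:ℝ) * (a + b) ≤ x) (m := 0) (Nat.zero_le _)
        (by simpa using hx)
    · intro i hi hi'
      have := Nat.findGreatest_is_greatest (P := fun k : ℕ => (k:ℝ) * (a + b) ≤ x) hi (by omega)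
      simpa using this
  have hsub : Finset.range (k+1) ⊆ Finset.range κ := Finset.range_subset_range.2 hk
  rw [← Finset.sum_subset hsub, Finset.sum_range_succ, Finset.sum_congr rfl (g := fun _ => (1:ℝ))]
  · have hn := P_node hκ ha hb hab hP hk
    rcases le_total x ((k:ℝ) * (a + b) + a) with h | h
    · have hm : (x - (k:ℝ) * (a + b)) / a ∈ Set.Icc (0:ℝ) 1 :=
        ⟨div_nonneg (by linarith) ha.le, by rw [div_le_one ha]; linarith⟩
      have e := P_cell hκ ha hb hab hP hk hm
      rw [mul_div_cancel₀ _ ha.ne', add_sub_cancel, hn] at e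
      rw [cl_of_mem hm.1 hm.2, e]
      simp; field_simp
    · rw [cl_of_ge (by rw [le_div_iff₀ ha]; linarith), h1]
      have e := P_cell hκ ha hb hab hP hk (x := 1) ⟨zero_le_one, le_rfl⟩
      rw [mul_one, hn, h1] at e
      rcases Nat.lt_or_ge (k+1) κ with hk1 | hk1
      · have := hkx' (k+1) (by omega) hk1
        push_cast at this
        rw [P_gap hκ ha hb hab hP hk1 h this.le, e]
        simp; field_simp
      · have : k + 1 = κ := by omega
        have hkk : (k:ℝ) = κ - 1 := by rw [← this]; push_cast; ring
        have : x = (k:ℝ) * (a + b) + a := by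
          apply le_antisymm _ h
          rw [hkk]; linarith
        rw [this, e]
        simp; field_simp
  · intro i hi
    rw [cl_of_ge, h1]
    rw [le_div_iff₀ ha]
    have hik : (i:ℝ) + 1 ≤ k := by exact_mod_cast Finset.mem_range.1 hi
    have : ((i:ℝ) + 1) * (a + b) ≤ k * (a + b) := by gcongr
    linarith
  · intro i hi hi'
    rw [cl_of_le, h0]
    apply div_nonpos_of_nonpos_of_nonneg _ ha.le
    have := hkx' i (by simp only [Finset.mem_range] at hi'; omega) (Finset.mem_range.1 hi)
    linarith

omit hκ ha hb hab
variable {μ : Measure ℝ}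
    (hμ : ∀ x ∈ Set.Icc (0 : ℝ) 1, μ (Set.Icc 0 x) = ENNReal.ofReal (P x))
    (hμc : μ (Set.Icc (0 : ℝ) 1)ᶜ = 0)
include hμ hμc

lemma mu_Iic (x : ℝ) : μ (Set.Iic x) = ENNReal.ofReal (P (cl x)) := by
  have h0 := hP.2.1
  rcases lt_or_ge x 0 with hx | hx
  · rw [cl_of_le hx.le, h0, ENNReal.ofReal_zero]
    apply measure_mono_null _ hμc
    intro t ht ht'
    exact absurd (ht'.1.trans ht) (not_le.2 hx)
  · rw [← hμ _ ⟨cl_nonneg x, cl_le_one x⟩]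
    apply le_antisymm
    · calc μ (Set.Iic x) ≤ μ (Set.Icc 0 (cl x) ∪ (Set.Icc (0 : ℝ) 1)ᶜ) := by
            apply measure_mono
            intro t ht
            by_cases h : t ∈ Set.Icc (0:ℝ) 1
            · left
              refine ⟨h.1, ?_⟩
              have ht' : t ≤ x := ht
              unfold cl
              exact le_max_of_le_right (le_min ht' h.2)
            · right; exact h
        _ ≤ μ (Set.Icc 0 (cl x)) + μ (Set.Icc (0 : ℝ) 1)ᶜ := measure_union_le _ _
        _ = _ := by rw [hμc, add_zero]
    · apply measure_mono
      intro t ht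
      have : cl x ≤ x := by unfold cl; exact max_le hx (min_le_left _ _)
      exact ht.2.trans this

lemma mu_prob : IsProbabilityMeasure μ := by
  constructor
  have h1 : μ (Set.Icc 0 1) = 1 := by
    rw [hμ 1 ⟨zero_le_one, le_rfl⟩, hP.2.2.1, ENNReal.ofReal_one]
  apply le_antisymm
  · rw [← Set.union_compl_self (Set.Icc (0:ℝ) 1)]
    refine (measure_union_le _ _).trans ?_
    rw [h1, hμc, add_zero]
  · rw [← h1]; exact measure_mono (Set.subset_univ _)

lemma mu_noAtoms (hmono : MonotoneOn P (Set.Icc 0 1)) : NullSingletonClass μ := by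
  constructor
  intro x
  by_cases hx : x ∈ Set.Icc (0:ℝ) 1
  · rcases eq_or_lt_of_le hx.1 with h | h
    · rw [← h, ← Set.Icc_self, hμ 0 ⟨le_rfl, zero_le_one⟩, hP.2.1, ENNReal.ofReal_zero]
    · have hP0 : ∀ u ∈ Set.Icc (0:ℝ) 1, 0 ≤ P u := fun u hu => by
        rw [← hP.2.1]; exact hmono ⟨le_rfl, zero_le_one⟩ hu hu.1
      have key : ∀ u ∈ Set.Ico 0 x, μ {x} ≤ ENNReal.ofReal (P x - P u) := by
        intro u hu
        have hu' : u ∈ Set.Icc (0:ℝ) 1 := ⟨hu.1, hu.2.le.trans hx.2⟩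
        have hadd : μ (Set.Icc 0 u) + μ {x} ≤ μ (Set.Icc 0 x) := by
          rw [← measure_union _ (measurableSet_singleton x)]
          · apply measure_mono
            rintro t (ht | ht)
            · exact ⟨ht.1, ht.2.trans hu.2.le⟩
            · rw [Set.mem_singleton_iff.1 ht]; exact ⟨hx.1, le_rfl⟩
          · rw [Set.disjoint_singleton_right]
            intro hh; exact absurd hh.2 (not_le.2 hu.2)
        rw [hμ u hu', hμ x hx] at hadd
        rw [ENNReal.ofReal_sub _ (hP0 u hu')]
        exact ENNReal.le_sub_of_add_le_left ENNReal.ofReal_ne_top hadd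
      have hne : (nhdsWithin x (Set.Ico 0 x)).NeBot := by
        rw [← mem_closure_iff_nhdsWithin_neBot, closure_Ico h.ne]
        exact ⟨hx.1, le_rfl⟩
      have ht : Filter.Tendsto P (nhdsWithin x (Set.Ico 0 x)) (nhds (P x)) :=
        (hP.1 x hx).mono (fun t ht => ⟨ht.1, ht.2.le.trans hx.2⟩)
      have ht2 : Filter.Tendsto (fun u => ENNReal.ofReal (P x - P u))
          (nhdsWithin x (Set.Ico 0 x)) (nhds (ENNReal.ofReal (P x - P x))) :=
        (ENNReal.continuous_ofReal.tendsto _).comp (tendsto_const_nhds.sub ht)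
      rw [sub_self, ENNReal.ofReal_zero] at ht2
      have := ge_of_tendsto ht2 (Filter.eventually_of_mem self_mem_nhdsWithin key)
      exact le_antisymm this zero_le
  · apply measure_mono_null _ hμc
    rintro t rfl; exact hx

include hκ ha hb hab

lemma mu_selfSim (hmono : MonotoneOn P (Set.Icc 0 1)) : SelfSim μ κ a b := by
  have hprob := mu_prob hP hμ hμc
  have hκ0 : (κ:ℝ) ≠ 0 := by positivity
  have hP0 : ∀ u, 0 ≤ P (cl u) := fun u => by
    rw [← hP.2.1]
    exact hmono ⟨le_rfl, zero_le_one⟩ ⟨cl_nonneg u, cl_le_one u⟩ (cl_nonneg u)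
  have hmeas : ∀ k : ℕ, Measurable fun t : ℝ => (k:ℝ) * (a + b) + a * t := fun k => by fun_prop
  have heq : μ = ENNReal.ofReal (1 / κ) •
      ∑ k ∈ Finset.range κ, Measure.map (fun t : ℝ => (k:ℝ) * (a + b) + a * t) μ := by
    apply Measure.ext_of_Iic
    intro x
    rw [mu_Iic hP hμ hμc, P_sum hκ ha hb hab hP, ENNReal.ofReal_mul (by positivity),
      ENNReal.ofReal_sum_of_nonneg (fun i _ => hP0 _)]
    rw [Measure.smul_apply, Measure.finsetSum_apply, smul_eq_mul]
    congr 1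
    apply Finset.sum_congr rfl
    intro k _
    rw [Measure.map_apply (hmeas k) measurableSet_Iic, ← mu_Iic hP hμ hμc]
    congr 1
    ext t
    simp only [Set.mem_Iic, Set.mem_preimage]
    rw [le_div_iff₀ ha]
    constructor <;> intro h <;> linarith
  have hsupp : ∀ᵐ t ∂μ, t ∈ Set.Icc (0:ℝ) 1 := hμc
  intro f
  conv_lhs => rw [heq]
  have hpm : ∀ k : ℕ, IsProbabilityMeasure
      (Measure.map (fun t : ℝ => (k:ℝ) * (a + b) + a * t) μ) := fun k =>
    Measure.isProbabilityMeasure_map (hmeas k).aemeasurable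
  rw [integral_smul_measure, integral_finsetSum_measure (fun k _ => EE_int _ f),
    ENNReal.toReal_ofReal (by positivity), smul_eq_mul]
  congr 1
  apply Finset.sum_congr rfl
  intro k _
  rw [integral_map (hmeas k).aemeasurable f.continuous.aestronglyMeasurable]
  apply integral_congr_ae
  filter_upwards [hsupp] with t ht
  rw [cl_of_mem ht.1 ht.2]
end

lemma eigen_of (μ : Measure ℝ) [IsProbabilityMeasure μ] [NullSingletonClass μ]
    (hμc : μ (Set.Icc (0 : ℝ) 1)ᶜ = 0) (l : ℝ) (hB : fB μ l = 0) : IsDirichletEigen μ l := by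
  have hsupp : ∀ᵐ t ∂μ, t ∈ Set.Icc (0:ℝ) 1 := hμc
  have hψ0 : ps μ l 0 = 0 := by
    rw [ps_eq, K_apply]; simp [kk_zero, cl_of_le le_rfl]
  have hint := EE_int μ (ps μ l)
  have hG : ContinuousOn (fun x => ∫ t in Set.Icc (0:ℝ) x, ps μ l t ∂μ) (Set.Icc 0 1) :=
    intervalIntegral.continuousOn_primitive_Icc hint.integrableOn
  refine ⟨fun x => ps μ l x, fun x => 1 - l * ∫ t in Set.Icc (0:ℝ) x, ps μ l t ∂μ,
    (ps μ l).continuous.continuousOn, continuousOn_const.sub (continuousOn_const.mul hG),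
    ?_, ?_, ?_, hψ0, hB⟩
  · by_contra hcon
    push Not at hcon
    have hK : K μ (ps μ l) 1 = 0 := by
      rw [K_apply]
      apply integral_eq_zero_of_ae
      filter_upwards [hsupp] with t ht
      simp [hcon t ht]
    have := ps_eq μ l 1
    rw [hK, hcon 1 ⟨zero_le_one, le_rfl⟩, cl_of_ge le_rfl] at this
    norm_num at this
  · intro x hx
    have hfub : ∫ s in (0:ℝ)..x, ∫ t in Set.Icc (0:ℝ) s, ps μ l t ∂μ = K μ (ps μ l) x := by
      rw [intervalIntegral.integral_of_le hx.1]
      have e1 : ∀ s, ∫ t in Set.Icc (0:ℝ) s, ps μ l t ∂μ =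
          ∫ t, {p : ℝ × ℝ | 0 ≤ p.2 ∧ p.2 ≤ p.1}.indicator (fun p => ps μ l p.2) (s, t) ∂μ := by
        intro s
        rw [← integral_indicator measurableSet_Icc]
        congr 1
      simp_rw [e1]
      have hms : MeasurableSet {p : ℝ × ℝ | 0 ≤ p.2 ∧ p.2 ≤ p.1} :=
        (measurableSet_le measurable_const measurable_snd).inter
          (measurableSet_le measurable_snd measurable_fst)
      rw [integral_integral_swap]
      · rw [K_apply]
        apply integral_congr_ae
        filter_upwards [hsupp] with t ht
        have e2 : ∀ s, {p : ℝ × ℝ | 0 ≤ p.2 ∧ p.2 ≤ p.1}.indicator (fun p => ps μ l p.2) (s, t)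
            = (Set.Ici t).indicator (fun _ => ps μ l t) s := by
          intro s
          simp only [Set.indicator, Set.mem_setOf_eq, Set.mem_Ici, ht.1, true_and]
        simp_rw [e2]
        rw [integral_indicator measurableSet_Ici, setIntegral_const, smul_eq_mul,
          Measure.real, Measure.restrict_apply' measurableSet_Ioc]
        have hv : volume (Set.Ici t ∩ Set.Ioc 0 x) = ENNReal.ofReal (x - t) := by
          apply le_antisymm
          · rw [← Real.volume_Icc]
            apply measure_mono
            rintro s ⟨h1, h2⟩; exact ⟨h1, h2.2⟩
          · rw [← Real.volume_Ioc]
            apply measure_mono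
            rintro s ⟨h1, h2⟩; exact ⟨h1.le, ht.1.trans_lt h1, h2⟩
        rw [hv, ENNReal.toReal_ofReal', kk, cl_of_mem hx.1 hx.2, cl_of_mem ht.1 ht.2]
      · refine Integrable.of_bound ?_ ‖ps μ l‖ ?_
        · exact ((((ps μ l).continuous.measurable.comp measurable_snd).indicator
            hms).aestronglyMeasurable)
        · refine Filter.Eventually.of_forall fun p => ?_
          simp only [Function.uncurry, Set.indicator]
          split_ifs
          · exact (ps μ l).norm_coe_le_norm _
          · simp
    rw [intervalIntegral.integral_sub]
    · rw [intervalIntegral.integral_const_mul, hfub]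
      show ps μ l x = ps μ l 0 + _
      rw [hψ0, ps_eq, cl_of_mem hx.1 hx.2]
      simp
    · exact intervalIntegrable_const
    · apply ContinuousOn.intervalIntegrable
      rw [Set.uIcc_of_le hx.1]
      exact (continuousOn_const.mul hG).mono (Set.Icc_subset_Icc_right hx.2)
  · intro x hx
    simp

theorem asymptotic_coefficient_nonconstant (κ : ℕ) (a b : ℝ) (hκ : 2 ≤ κ)
    (ha : 0 < a) (ha' : a < 1 / κ) (hb : b = (1 - κ * a) / (κ - 1))
    (D ν : ℝ) (hD : D = Real.log κ / Real.log (κ / a)) (hν : ν = Real.log (κ / a))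
    (P : ℝ → ℝ) (hP : CantorType κ a b P) (hPmono : MonotoneOn P (Set.Icc 0 1))
    (μ : Measure ℝ)
    (hμ : ∀ x ∈ Set.Icc (0 : ℝ) 1, μ (Set.Icc 0 x) = ENNReal.ofReal (P x))
    (hμc : μ (Set.Icc (0 : ℝ) 1)ᶜ = 0)
    (hfin : ∀ Λ : ℝ, 0 < Λ → ({l : ℝ | IsDirichletEigen μ l} ∩ Set.Ioc 0 Λ).Finite)
    (s : ℝ → ℝ) (hs : Continuous s) (hper : Function.Periodic s ν)
    (hasymp : Filter.Tendsto
      (fun Λ : ℝ => (({l : ℝ | IsDirichletEigen μ l} ∩ Set.Ioc 0 Λ).ncard : ℝ) / Λ ^ D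
        - s (Real.log Λ))
      Filter.atTop (nhds 0)) :
    ¬ ∃ c : ℝ, ∀ t : ℝ, s t = c := by
  rintro ⟨c, hc⟩
  have hκR : (2:ℝ) ≤ κ := by exact_mod_cast hκ
  have hκ0 : (0:ℝ) < κ := by linarith
  have hκa : (κ:ℝ) * a < 1 := by
    rw [lt_div_iff₀ hκ0] at ha'; linarith
  have hb0 : 0 < b := by
    rw [hb]; exact div_pos (by linarith) (by linarith)
  have hab : κ * a + (κ - 1) * b = 1 := by
    rw [hb]
    have : (κ:ℝ) - 1 ≠ 0 := by linarith
    field_simp; ring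
  have ha2 : 2 * a < 1 := by nlinarith
  have hprob := mu_prob hP hμ hμc
  have hatom := mu_noAtoms hP hμ hμc hPmono
  have hss := mu_selfSim hκ ha hb0 hab hP hμ hμc hPmono
  have hlogκ : 0 < Real.log κ := Real.log_pos (by linarith)
  have hloga : Real.log a < 0 := Real.log_neg ha (by linarith)
  have hlog : Real.log (κ / a) = Real.log κ - Real.log a :=
    Real.log_div hκ0.ne' ha.ne'
  have hlogp : 0 < Real.log (κ / a) := by rw [hlog]; linarith
  have hD0 : 0 < D := by rw [hD]; exact div_pos hlogκ hlogp
  have hD1 : D ≤ 1 := by rw [hD, div_le_one hlogp, hlog]; linarith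
  have hrD : (κ / a : ℝ) ^ D = κ := by
    rw [Real.rpow_def_of_pos (by positivity), hD, mul_div_cancel₀ _ hlogp.ne', Real.exp_log hκ0]
  refine TMat.main (mkT μ hκ ha hb0 hab hss ha2) hκ ha hκa hb0
    (N := fun L => (({l : ℝ | IsDirichletEigen μ l} ∩ Set.Ioc 0 L).ncard : ℝ))
    ?_ hD0 hD1 hrD (c := c) ?_
  · intro u v l hu hul hlv hB
    have hBl : IsDirichletEigen μ l := eigen_of μ hμc l hB
    have hlt : ({l : ℝ | IsDirichletEigen μ l} ∩ Set.Ioc 0 u).ncard <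
        ({l : ℝ | IsDirichletEigen μ l} ∩ Set.Ioc 0 v).ncard := by
      apply Set.ncard_lt_ncard _ (hfin v (by linarith))
      refine ⟨?_, ?_⟩
      · rintro t ⟨h1, h2⟩
        exact ⟨h1, h2.1, by linarith [h2.2]⟩
      · intro h
        have := (h (show l ∈ _ from ⟨hBl, by linarith, hlv⟩)).2.2
        linarith
    show (_ : ℝ) + 1 ≤ _
    exact_mod_cast hlt
  · have := hasymp.add_const c
    simp only [hc, zero_add, sub_add_cancel] at this
    exact this
end

section
/- Let λ > 0 and let y, g : [0,1] → ℝ be continuous functions with y not identically zero, satisfying y(x) = y(0) + ∫₀ˣ g(t) dt and g(x) = g(0) − λ·∫_{[0,x]} y dμ for all x ∈ [0,1], together with the Neumann conditions g(0) = g(1) = 0, where μ is the Lebesgue–Stieltjes measure of the Cantor-type self-similar function P with parameters κ, a, b. Then (κ/a)·λ is again an eigenvalue of the same Neumann problem: there exist continuous z, h : [0,1] → ℝ with z not identically zero satisfying z(x) = z(0) + ∫₀ˣ h(t) dt, h(x) = h(0) − (κ/a)·λ·∫_{[0,x]} z dμ for all x ∈ [0,1], and h(0) = h(1) = 0. -/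
open MeasureTheory

/-- `lam` is an eigenvalue of the boundary value problem
`-y'' - λ ρ y = 0`, `y⁽¹⁾(0) - γ₀ y(0) = 0`, `y⁽¹⁾(1) + γ₁ y(1) = 0`, where `ρ` is the
distributional derivative of the function whose Lebesgue–Stieltjes measure is `μ`:
there are continuous `y, g : [0,1] → ℝ`, `y` not identically zero, with
`y(x) = y(0) + ∫₀ˣ g`, `g(x) = g(0) - λ ∫_{[0,x]} y dμ`, and
`g(0) - γ₀ y(0) = 0`, `g(1) + γ₁ y(1) = 0`. -/
def IsEigen (μ : Measure ℝ) (γ₀ γ₁ lam : ℝ) : Prop :=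
  ∃ y g : ℝ → ℝ, ContinuousOn y (Set.Icc 0 1) ∧ ContinuousOn g (Set.Icc 0 1) ∧
    (∃ x ∈ Set.Icc (0 : ℝ) 1, y x ≠ 0) ∧
    (∀ x ∈ Set.Icc (0 : ℝ) 1, y x = y 0 + ∫ t in (0 : ℝ)..x, g t) ∧
    (∀ x ∈ Set.Icc (0 : ℝ) 1, g x = g 0 - lam * ∫ t in Set.Icc (0 : ℝ) x, y t ∂μ) ∧
    g 0 - γ₀ * y 0 = 0 ∧ g 1 + γ₁ * y 1 = 0

noncomputable def clp (u : ℝ) : ℝ := max 0 (min 1 u)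

lemma clp_cont : Continuous clp := by unfold clp; fun_prop

lemma clp_mem (u : ℝ) : clp u ∈ Set.Icc (0:ℝ) 1 :=
  ⟨le_max_left _ _, max_le zero_le_one (min_le_left _ _)⟩

lemma clp_of_mem {u : ℝ} (h : u ∈ Set.Icc (0:ℝ) 1) : clp u = u := by
  unfold clp; rw [min_eq_right h.2, max_eq_right h.1]

lemma clp_of_le {u : ℝ} (h : u ≤ 0) : clp u = 0 := by
  unfold clp; rw [max_eq_left]; exact (min_le_right _ _).trans h

lemma clp_of_ge {u : ℝ} (h : 1 ≤ u) : clp u = 1 := by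
  unfold clp; rw [min_eq_left h, max_eq_right zero_le_one]

lemma comp_clp_cont {f : ℝ → ℝ} (hf : ContinuousOn f (Set.Icc 0 1)) :
    Continuous (fun u => f (clp u)) :=
  hf.comp_continuous clp_cont clp_mem

lemma sum_split {n k : ℕ} (hk : k < n) (f p : ℕ → ℝ) (h1 : ∀ j < k, f j = p j)
    (h2 : ∀ j, k < j → f j = 0) :
    ∑ j ∈ Finset.range n, f j = ∑ j ∈ Finset.range k, p j + f k := by
  rw [← Finset.sum_subset (s₁ := Finset.range (k+1)), Finset.sum_range_succ]
  · congr 1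
    exact Finset.sum_congr rfl fun j hj => h1 j (Finset.mem_range.1 hj)
  · intro j hj; simp at hj ⊢; omega
  · intro j _ hj; apply h2; simp at hj; omega

lemma Y_int (y g : ℝ → ℝ) (hg : ContinuousOn g (Set.Icc 0 1))
    (hyint : ∀ x ∈ Set.Icc (0 : ℝ) 1, y x = y 0 + ∫ t in (0 : ℝ)..x, g t)
    (hg0 : g 0 = 0) (hg1 : g 1 = 0) (u : ℝ) :
    y (clp u) = y 0 + ∫ t in (0:ℝ)..u, g (clp t) := by
  have hc := comp_clp_cont hg
  have key : ∀ x ∈ Set.Icc (0 : ℝ) 1, y x = y 0 + ∫ t in (0 : ℝ)..x, g (clp t) := by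
    intro x hx
    rw [hyint x hx]
    congr 1
    apply intervalIntegral.integral_congr
    intro t ht
    rw [Set.uIcc_of_le hx.1] at ht
    simp only
    rw [clp_of_mem ⟨ht.1, ht.2.trans hx.2⟩]
  rcases le_total u 0 with h | h
  · rw [clp_of_le h, intervalIntegral.integral_congr (g := fun _ => (0:ℝ))]
    · simp
    · intro t ht
      rw [Set.uIcc_of_ge h] at ht
      simp only
      rw [clp_of_le ht.2, hg0]
  rcases le_total u 1 with h' | h'
  · rw [clp_of_mem ⟨h, h'⟩]; exact key u ⟨h, h'⟩
  · rw [clp_of_ge h', key 1 ⟨zero_le_one, le_rfl⟩,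
      ← intervalIntegral.integral_add_adjacent_intervals (a := 0) (b := 1) (c := u)
        (hc.intervalIntegrable _ _) (hc.intervalIntegrable _ _),
      intervalIntegral.integral_congr (a := 1) (b := u) (g := fun _ => (0:ℝ))]
    · simp
    · intro t ht
      rw [Set.uIcc_of_le h'] at ht
      simp only
      rw [clp_of_ge ht.1, hg1]

lemma G_int (μ : Measure ℝ) (hμc : μ (Set.Icc (0 : ℝ) 1)ᶜ = 0) (lam : ℝ) (y g : ℝ → ℝ)
    (hgint : ∀ x ∈ Set.Icc (0 : ℝ) 1, g x = g 0 - lam * ∫ t in Set.Icc (0 : ℝ) x, y t ∂μ)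
    (hg0 : g 0 = 0) (u : ℝ) :
    g (clp u) = - lam * ∫ t in Set.Icc (0:ℝ) u, y (clp t) ∂μ := by
  have key : ∀ x ∈ Set.Icc (0 : ℝ) 1, g x = - lam * ∫ t in Set.Icc (0 : ℝ) x, y (clp t) ∂μ := by
    intro x hx
    rw [hgint x hx, hg0, setIntegral_congr_fun (g := fun t => y (clp t)) measurableSet_Icc]
    · ring
    · intro t ht
      simp only
      rw [clp_of_mem ⟨ht.1, ht.2.trans hx.2⟩]
  rcases lt_or_ge u 0 with h | h
  · rw [clp_of_le h.le, hg0, Set.Icc_eq_empty (by linarith)]; simp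
  rcases le_total u 1 with h' | h'
  · rw [clp_of_mem ⟨h, h'⟩]; exact key u ⟨h, h'⟩
  · rw [clp_of_ge h', key 1 ⟨zero_le_one, le_rfl⟩]
    congr 1
    apply setIntegral_congr_set
    have : ∀ᵐ t ∂μ, t ∈ Set.Icc (0:ℝ) 1 := hμc
    filter_upwards [this] with t ht
    apply propext
    exact ⟨fun _ => ⟨ht.1, ht.2.trans h'⟩, fun _ => ht⟩

lemma F_selfsim (κ : ℕ) (a d : ℝ) (hκ : 2 ≤ κ) (ha : 0 < a) (had : a < d)
    (hd : ((κ:ℝ) - 1) * d + a = 1) (P : ℝ → ℝ) (hPc : ContinuousOn P (Set.Icc 0 1))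
    (h0 : P 0 = 0) (h1 : P 1 = 1)
    (hgap : ∀ k : ℕ, 1 ≤ k → k ≤ κ - 1 →
      ∃ c : ℝ, ∀ x ∈ Set.Ioo (((k : ℝ) - 1) * d + a) ((k : ℝ) * d), P x = c)
    (hss : ∀ k : ℕ, k ≤ κ - 1 → ∃ c : ℝ, ∀ x ∈ Set.Icc (0 : ℝ) 1,
      (κ : ℝ) * P ((k : ℝ) * d + a * x) = P x + c) (x : ℝ) :
    (κ:ℝ) * P (clp x) = ∑ k ∈ Finset.range κ, P (clp ((x - k * d) / a)) := by
  have hd0 : 0 < d := ha.trans had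
  have hkd : ∀ k : ℕ, k < κ → (k:ℝ) * d + a ≤ 1 := by
    intro k hk
    have : (k:ℝ) + 1 ≤ κ := by exact_mod_cast hk
    nlinarith
  have hgap' : ∀ k : ℕ, k + 1 < κ → ∀ x ∈ Set.Icc ((k:ℝ) * d + a) (((k:ℝ)+1) * d),
      P x = P ((k:ℝ) * d + a) := by
    intro k hk
    obtain ⟨c, hc⟩ := hgap (k+1) (by omega) (by omega)
    push_cast at hc
    rw [add_sub_cancel_right] at hc
    have hlt : (k:ℝ) * d + a < ((k:ℝ)+1) * d := by linarith
    have hk1 := hkd (k+1) hk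
    push_cast at hk1
    have hsub : Set.Icc ((k:ℝ) * d + a) (((k:ℝ)+1) * d) ⊆ Set.Icc 0 1 :=
      Set.Icc_subset_Icc (by positivity) (by linarith)
    have : Set.EqOn P (fun _ => c) (Set.Icc ((k:ℝ) * d + a) (((k:ℝ)+1) * d)) :=
      Set.EqOn.of_subset_closure hc (hPc.mono hsub) continuousOn_const
        Set.Ioo_subset_Icc_self (by rw [closure_Ioo hlt.ne])
    intro x hx
    rw [this hx, this ⟨le_rfl, hlt.le⟩]
  have hC : ∀ k : ℕ, k < κ → ∀ t ∈ Set.Icc (0:ℝ) 1, (κ:ℝ) * P (k * d + a * t) = P t + k := by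
    intro k
    induction k with
    | zero =>
      intro hk t ht
      obtain ⟨c, hc⟩ := hss 0 (by omega)
      have e := hc 0 (by simp)
      simp [h0] at e
      rw [hc t ht, ← e]; simp
    | succ k ih =>
      intro hk t ht
      obtain ⟨c, hc⟩ := hss (k+1) (by omega)
      have e := hc 0 (by simp)
      have e1 := ih (by omega) 1 (by simp)
      have e2 := hgap' k hk (((k:ℝ)+1) * d) ⟨by linarith, le_rfl⟩
      rw [hc t ht]
      push_cast at e ⊢
      rw [mul_zero, add_zero, e2, h0, ← mul_one a, e1, h1] at e
      linarith
  have lo : ∀ j : ℕ, x ≤ j * d → P (clp ((x - j * d) / a)) = 0 := by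
    intro j hj
    rw [clp_of_le, h0]
    exact div_nonpos_of_nonpos_of_nonneg (by linarith) ha.le
  have hi : ∀ j : ℕ, j * d + a ≤ x → P (clp ((x - j * d) / a)) = 1 := by
    intro j hj
    rw [clp_of_ge, h1]
    rw [le_div_iff₀ ha]; linarith
  rcases lt_or_ge x 0 with h | h
  · rw [clp_of_le h.le, h0, Finset.sum_eq_zero]
    · simp
    · intro j _; apply lo
      have : 0 ≤ (j:ℝ) * d := by positivity
      linarith
  rcases lt_or_ge 1 x with h' | h'
  · rw [clp_of_ge h'.le, h1, Finset.sum_congr rfl (g := fun _ => (1:ℝ))]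
    · simp
    · intro j hj; apply hi
      have := hkd j (Finset.mem_range.1 hj)
      linarith
  rw [clp_of_mem ⟨h, h'⟩]
  set k := ⌊x / d⌋₊ with hk
  have hk1 : (k:ℝ) * d ≤ x := by
    have := Nat.floor_le (a := x / d) (by positivity)
    rwa [le_div_iff₀ hd0] at this
  have hk2 : x < ((k:ℝ) + 1) * d := by
    have := Nat.lt_floor_add_one (x / d)
    rwa [div_lt_iff₀ hd0] at this
  have hkκ : k < κ := by
    by_contra hcon
    have : (κ:ℝ) ≤ k := by exact_mod_cast not_lt.1 hcon
    nlinarith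
  rw [sum_split hkκ (fun j : ℕ => P (clp ((x - j * d) / a))) (fun _ => 1)]
  · rcases le_total x (k * d + a) with hx | hx
    · have hm : (x - k * d) / a ∈ Set.Icc (0:ℝ) 1 :=
        ⟨div_nonneg (by linarith) ha.le, by rw [div_le_one ha]; linarith⟩
      have := hC k hkκ _ hm
      rw [mul_div_cancel₀ _ ha.ne', add_sub_cancel] at this
      rw [clp_of_mem hm, this]; simp [add_comm]
    · rw [hi k hx]
      have e1 := hC k hkκ 1 (by simp)
      rw [mul_one, h1] at e1
      have : P x = P (k * d + a) := by
        by_cases hkk : k + 1 < κ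
        · exact hgap' k hkk x ⟨hx, hk2.le⟩
        · have : (κ:ℝ) = k + 1 := by exact_mod_cast (by omega : κ = k + 1)
          rw [this] at hd
          congr 1; linarith
      rw [this, e1]; simp [add_comm]
  · intro j hj
    apply hi
    have : (j:ℝ) + 1 ≤ k := by exact_mod_cast hj
    nlinarith
  · intro j hj
    apply lo
    have : (k:ℝ) + 1 ≤ j := by exact_mod_cast hj
    nlinarith

lemma mu_selfsim (κ : ℕ) (a d : ℝ) (hκ : 2 ≤ κ) (ha : 0 < a)
    (P : ℝ → ℝ) (hPmono : MonotoneOn P (Set.Icc 0 1)) (h0 : P 0 = 0)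
    (hF : ∀ x, (κ:ℝ) * P (clp x) = ∑ k ∈ Finset.range κ, P (clp ((x - k * d) / a)))
    (μ : Measure ℝ) [IsFiniteMeasure μ]
    (hμ : ∀ x ∈ Set.Icc (0 : ℝ) 1, μ (Set.Icc 0 x) = ENNReal.ofReal (P x))
    (hμc : μ (Set.Icc (0 : ℝ) 1)ᶜ = 0) :
    μ = ∑ k ∈ Finset.range κ, ENNReal.ofReal (1 / κ) • μ.map (fun t => k * d + a * t) := by
  have hκ0 : (0:ℝ) < κ := by exact_mod_cast (by omega : 0 < κ)
  have hI : ∀ x, μ (Set.Iic x) = ENNReal.ofReal (P (clp x)) := by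
    intro x
    rw [← hμ _ (clp_mem x)]
    apply measure_congr
    have h1 : ∀ᵐ t ∂μ, t ∈ Set.Icc (0:ℝ) 1 := hμc
    have h2 : ∀ᵐ t ∂μ, t ≠ 0 := by
      have := hμ 0 (by simp)
      rw [Set.Icc_self, h0, ENNReal.ofReal_zero] at this
      rw [ae_iff]; simpa using this
    filter_upwards [h1, h2] with t ht ht0
    apply propext
    change t ≤ x ↔ (0 ≤ t ∧ t ≤ max 0 (min 1 x))
    have : 0 < t := lt_of_le_of_ne ht.1 (Ne.symm ht0)
    simp only [le_max_iff, le_min_iff]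
    constructor
    · intro h; exact ⟨ht.1, Or.inr ⟨ht.2, h⟩⟩
    · rintro ⟨_, h | h⟩
      · linarith
      · exact h.2
  have hPn : ∀ u, 0 ≤ P (clp u) := fun u => by
    rw [← h0]; exact hPmono (by simp) (clp_mem u) (clp_mem u).1
  apply Measure.ext_of_Iic
  intro x
  rw [hI, Measure.finsetSum_apply]
  have : ∀ k ∈ Finset.range κ, (ENNReal.ofReal (1 / κ) • μ.map (fun t => k * d + a * t)) (Set.Iic x)
      = ENNReal.ofReal ((1/κ) * P (clp ((x - k * d) / a))) := by
    intro k _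
    rw [Measure.smul_apply, Measure.map_apply (by fun_prop) measurableSet_Iic, smul_eq_mul,
      ENNReal.ofReal_mul (by positivity), ← hI]
    congr 2
    ext t
    simp only [Set.mem_preimage, Set.mem_Iic]
    rw [le_div_iff₀ ha]
    constructor <;> intro h <;> linarith
  rw [Finset.sum_congr rfl this, ← ENNReal.ofReal_sum_of_nonneg, ← Finset.mul_sum, ← hF]
  · congr 1; field_simp
  · intro i _; exact mul_nonneg (by positivity) (hPn _)

lemma exists_coeff (κ : ℕ) (hκ : 2 ≤ κ) (y0 y1 : ℝ) : ∃ c : ℕ → ℝ,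
    (∀ k, k + 1 < κ → c k * y1 = c (k+1) * y0) ∧ ∃ j < κ, c j ≠ 0 := by
  by_cases h : y0 = 0
  · refine ⟨fun k => if k + 1 = κ then 1 else 0, ?_, κ - 1, by omega, ?_⟩
    · intro k hk
      simp [h, hk.ne]
    · have : κ - 1 + 1 = κ := by omega
      simp [this]
  · refine ⟨fun k => (y1 / y0) ^ k, ?_, 0, by omega, by simp⟩
    intro k _
    simp only [pow_succ]; field_simp

theorem neumann_eigenvalue_scaling (κ : ℕ) (a b : ℝ) (hκ : 2 ≤ κ)
    (ha : 0 < a) (ha' : a < 1 / κ) (hb : b = (1 - κ * a) / (κ - 1))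
    (P : ℝ → ℝ) (hP : CantorType κ a b P) (hPmono : MonotoneOn P (Set.Icc 0 1))
    (μ : Measure ℝ)
    (hμ : ∀ x ∈ Set.Icc (0 : ℝ) 1, μ (Set.Icc 0 x) = ENNReal.ofReal (P x))
    (hμc : μ (Set.Icc (0 : ℝ) 1)ᶜ = 0)
    (lam : ℝ) (hlam : 0 < lam)
    (y g : ℝ → ℝ) (hy : ContinuousOn y (Set.Icc 0 1)) (hg : ContinuousOn g (Set.Icc 0 1))
    (hy0 : ∃ x ∈ Set.Icc (0 : ℝ) 1, y x ≠ 0)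
    (hyint : ∀ x ∈ Set.Icc (0 : ℝ) 1, y x = y 0 + ∫ t in (0 : ℝ)..x, g t)
    (hgint : ∀ x ∈ Set.Icc (0 : ℝ) 1, g x = g 0 - lam * ∫ t in Set.Icc (0 : ℝ) x, y t ∂μ)
    (hg0 : g 0 = 0) (hg1 : g 1 = 0) :
    ∃ z h : ℝ → ℝ, ContinuousOn z (Set.Icc 0 1) ∧ ContinuousOn h (Set.Icc 0 1) ∧
      (∃ x ∈ Set.Icc (0 : ℝ) 1, z x ≠ 0) ∧
      (∀ x ∈ Set.Icc (0 : ℝ) 1, z x = z 0 + ∫ t in (0 : ℝ)..x, h t) ∧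
      (∀ x ∈ Set.Icc (0 : ℝ) 1, h x = h 0 - (κ / a) * lam * ∫ t in Set.Icc (0 : ℝ) x, z t ∂μ) ∧
      h 0 = 0 ∧ h 1 = 0 := by
  obtain ⟨hPc, h0, h1, hgap, hss⟩ := hP
  have hκR : (2:ℝ) ≤ κ := by exact_mod_cast hκ
  have hκa : κ * a < 1 := by
    rw [lt_div_iff₀ (by linarith)] at ha'; linarith
  have hbpos : 0 < b := by rw [hb]; exact div_pos (by linarith) (by linarith)
  have hd : ((κ:ℝ) - 1) * (a + b) + a = 1 := by
    have : (κ:ℝ) - 1 ≠ 0 := by linarith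
    rw [hb]; field_simp; ring
  have had : a < a + b := by linarith
  clear hb
  generalize a + b = d at *
  have hF := F_selfsim κ a d hκ ha had hd P hPc h0 h1 hgap hss
  have : IsFiniteMeasure μ := ⟨by
    rw [← Set.union_compl_self (Set.Icc (0:ℝ) 1)]
    refine (measure_union_le _ _).trans_lt ?_
    rw [hμc, hμ 1 (by simp)]; simp⟩
  have hμs := mu_selfsim κ a d hκ ha P hPmono h0 hF μ hμ hμc
  have hd0 : 0 < d := ha.trans had
  have hY := Y_int y g hg hyint hg0 hg1
  have hG := G_int μ hμc lam y g hgint hg0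
  have hYc := comp_clp_cont hy
  have hGc := comp_clp_cont hg
  obtain ⟨c, hc, j, hj, hcj⟩ := exists_coeff κ hκ (y 0) (y 1)
  set z : ℝ → ℝ := fun x => c 0 * y 0 +
    ∑ k ∈ Finset.range κ, c k * (y (clp ((x - k * d) / a)) - y 0) with hz
  set h : ℝ → ℝ := fun x => ∑ k ∈ Finset.range κ, c k / a * g (clp ((x - k * d) / a)) with hh
  have hzc : Continuous z := by
    refine continuous_const.add (continuous_finsetSum _ fun k _ => continuous_const.mul
      (Continuous.sub (hYc.comp (by fun_prop : Continuous fun x : ℝ => (x - k * d) / a))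
        continuous_const))
  have hterm : ∀ k : ℕ, Continuous fun x => c k / a * g (clp ((x - k * d) / a)) := fun k =>
    continuous_const.mul (hGc.comp (by fun_prop : Continuous fun x : ℝ => (x - k * d) / a))
  have hhc : Continuous h := continuous_finsetSum _ fun k _ => hterm k
  have hzS : ∀ k < κ, ∀ t ∈ Set.Icc (0:ℝ) 1, z (k * d + a * t) = c k * y (clp t) := by
    intro k hk t ht
    simp only [hz]
    rw [sum_split hk (fun i : ℕ => c i * (y (clp ((k * d + a * t - i * d) / a)) - y 0))
      (fun i => c i * (y 1 - y 0))]
    · have tel : ∀ m : ℕ, m < κ →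
          c 0 * y 0 + ∑ i ∈ Finset.range m, c i * (y 1 - y 0) = c m * y 0 := by
        intro m
        induction m with
        | zero => simp
        | succ m ih =>
          intro hm
          rw [Finset.sum_range_succ, ← add_assoc, ih (by omega), ← hc m hm]; ring
      rw [← add_assoc, tel k hk]
      have : (k * d + a * t - k * d) / a = t := by field_simp; ring
      rw [this]; ring
    · intro i hi
      rw [clp_of_ge]
      rw [le_div_iff₀ ha]
      have : (i:ℝ) + 1 ≤ k := by exact_mod_cast hi
      have := mul_nonneg ha.le ht.1
      nlinarith
    · intro i hi
      rw [clp_of_le, sub_self, mul_zero]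
      apply div_nonpos_of_nonpos_of_nonneg _ ha.le
      have : (k:ℝ) + 1 ≤ i := by exact_mod_cast hi
      have := mul_le_mul_of_nonneg_left ht.2 ha.le
      nlinarith
  have hz0 : z 0 = c 0 * y 0 := by
    have := hzS 0 (by omega) 0 (by simp)
    simpa [clp_of_le] using this
  have hh0 : h 0 = 0 := by
    apply Finset.sum_eq_zero
    intro k _
    rw [clp_of_le, hg0, mul_zero]
    apply div_nonpos_of_nonpos_of_nonneg _ ha.le
    have : 0 ≤ (k:ℝ) * d := by positivity
    linarith
  have hkd : ∀ k : ℕ, k < κ → (k:ℝ) * d + a ≤ 1 := by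
    intro k hk
    have : (k:ℝ) + 1 ≤ κ := by exact_mod_cast hk
    nlinarith
  refine ⟨z, h, hzc.continuousOn, hhc.continuousOn, ?_, ?_, ?_, hh0, ?_⟩
  · obtain ⟨x, hx, hyx⟩ := hy0
    refine ⟨j * d + a * x, ⟨?_, ?_⟩, ?_⟩
    · have := mul_nonneg ha.le hx.1
      positivity
    · have := mul_le_mul_of_nonneg_left hx.2 ha.le
      have := hkd j hj
      linarith
    · rw [hzS j hj x hx, clp_of_mem hx]; exact mul_ne_zero hcj hyx
  · intro x hx
    rw [hz0]
    simp only [hz, hh]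
    congr 1
    rw [intervalIntegral.integral_finsetSum fun k _ => (hterm k).intervalIntegrable _ _]
    apply Finset.sum_congr rfl
    intro k _
    rw [intervalIntegral.integral_const_mul]
    have e : ∀ t : ℝ, (t - k * d) / a = t / a - k * d / a := fun t => sub_div _ _ _
    simp only [e]
    rw [intervalIntegral.integral_comp_div_sub (fun u => g (clp u)) ha.ne',
      ← intervalIntegral.integral_interval_sub_left (a := 0) (hGc.intervalIntegrable _ _)
        (hGc.intervalIntegrable _ _)]
    have A := hY (x / a - k * d / a)
    have B := hY (0 / a - k * d / a)
    rw [clp_of_le (u := 0 / a - k * d / a)] at B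
    · rw [A, smul_eq_mul]
      have B' : ∫ t in (0:ℝ)..(0 / a - k * d / a), g (clp t) = 0 := by linarith
      rw [B']; field_simp; ring
    · have : 0 ≤ k * d / a := by positivity
      simpa using this
  · intro x hx
    rw [hh0]
    have hint : ∀ ν : Measure ℝ, IsFiniteMeasure ν →
        Integrable (Set.indicator (Set.Icc 0 x) z) ν := by
      intro ν _
      rw [integrable_indicator_iff measurableSet_Icc]
      exact hzc.continuousOn.integrableOn_compact isCompact_Icc
    have main : ∫ t in Set.Icc (0:ℝ) x, z t ∂μ =
        ∑ k ∈ Finset.range κ, (1 / (κ:ℝ)) * (c k *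
          ∫ t in Set.Icc (0:ℝ) ((x - k * d) / a), y (clp t) ∂μ) := by
      rw [← integral_indicator measurableSet_Icc]
      conv_lhs => rw [hμs]
      rw [integral_finsetSum_measure]
      · apply Finset.sum_congr rfl
        intro k hk
        have hk := Finset.mem_range.1 hk
        rw [integral_smul_measure, ENNReal.toReal_ofReal (by positivity), smul_eq_mul,
          integral_map (by fun_prop)
            ((hzc.measurable.indicator measurableSet_Icc).aestronglyMeasurable),
          ← integral_indicator measurableSet_Icc, ← integral_const_mul (c k)]
        congr 1
        apply integral_congr_ae
        have h1 : ∀ᵐ t ∂μ, t ∈ Set.Icc (0:ℝ) 1 := hμc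
        filter_upwards [h1] with t ht
        have hnn : 0 ≤ k * d + a * t := by
          have := mul_nonneg ha.le ht.1
          positivity
        by_cases hle : k * d + a * t ≤ x
        · rw [Set.indicator_of_mem (show k * d + a * t ∈ Set.Icc 0 x from ⟨hnn, hle⟩), Set.indicator_of_mem, hzS k hk t ht]
          exact ⟨ht.1, by rw [le_div_iff₀ ha]; linarith⟩
        · rw [Set.indicator_of_notMem (fun hm => hle hm.2), Set.indicator_of_notMem, mul_zero]
          intro hm
          have := hm.2
          rw [le_div_iff₀ ha] at this
          apply hle; linarith
      · intro k _
        apply Integrable.smul_measure _ ENNReal.ofReal_ne_top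
        exact hint _ inferInstance
    rw [main, Finset.mul_sum, zero_sub, ← Finset.sum_neg_distrib]
    simp only [hh]
    apply Finset.sum_congr rfl
    intro k _
    rw [hG]
    field_simp
  · apply Finset.sum_eq_zero
    intro k hk
    rw [clp_of_ge, hg1, mul_zero]
    rw [le_div_iff₀ ha]
    have := hkd k (Finset.mem_range.1 hk)
    linarith
end
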